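/- Let G be a finite solvable group acting faithfully and fixed-point-freely on a finite vector space V. Then either the Fitting height of G is at most 2, or the Fitting height of G equals 3 and G has a quotient isomorphic to CSU(2,3) (the conformal special unitary group of order 48, i.e., the binary octahedral group), whence |cod(G)| ≥ 6. -/

import Mathlib

open CategoryTheory

/-- The kernel of (the character of) a finite-dimensional complex representation. -/
noncomputable def charKer {G : Type} [Group G] (V : FDRep ℂ G) : Subgroup G :=
  MonoidHom.ker (Representation.asGroupHom V.ρ)

/-- The codegree of a character: `|G : ker χ| / χ(1)`. -/
noncomputable def codeg {G : Type} [Group G] (V : FDRep ℂ G) : ℕ :=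
  (charKer V).index / Module.finrank ℂ V

/-- The set of codegrees of irreducible characters of `G`. -/
def codSet (G : Type) [Group G] : Set ℕ :=
  {n | ∃ V : FDRep ℂ G, Simple V ∧ codeg V = n}

/-- Inner product of class functions on a finite group. -/
noncomputable def innerChar (G : Type) [Group G] (f g : G → ℂ) : ℂ :=
  (∑ᶠ x : G, f x * starRingEnd ℂ (g x)) / Nat.card G

open scoped Classical in
/-- The induced character `θ^G` of a character `θ` of a subgroup `H ≤ G`. -/
noncomputable def indChar {G : Type} [Group G] (H : Subgroup G) (θ : FDRep ℂ ↥H) : G → ℂ :=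
  fun g => (∑ᶠ x : G, if h : x * g * x⁻¹ ∈ H then θ.character ⟨x * g * x⁻¹, h⟩ else 0) /
    Nat.card ↥H

/-- `M/N` is nilpotent: some term of the lower central series of `M` (relative to `M`)
lands in `N`. -/
def nilpotentFactor {G : Type} [Group G] (N M : Subgroup G) : Prop :=
  ∃ m : ℕ, (fun K => ⁅K, M⁆)^[m] M ≤ N

/-- The Fitting height: the length of the shortest normal series with nilpotent factors. -/
noncomputable def fittingHeight (G : Type) [Group G] : ℕ :=
  sInf {n | ∃ c : Fin (n + 1) → Subgroup G, c 0 = ⊥ ∧ c (Fin.last n) = ⊤ ∧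
    (∀ i, (c i).Normal) ∧ (∀ i : Fin n, c i.castSucc ≤ c i.succ) ∧
    ∀ i : Fin n, nilpotentFactor (c i.castSucc) (c i.succ)}

/-- The binary octahedral group `CSU(2,3)`: the group of order 48 whose Fitting subgroup is
`Q₈` and whose Sylow 2-subgroups are generalized quaternion of order 16. -/
def IsBinaryOctahedral (K : Type) [Group K] : Prop :=
  Nat.card K = 48 ∧
    (∃ Fit : Subgroup K, IsGreatest {N : Subgroup K | N.Normal ∧ Group.IsNilpotent ↥N} Fit ∧
      Nonempty (↥Fit ≃* QuaternionGroup 2)) ∧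
    ∀ P : Sylow 2 K, Nonempty (↥(P : Subgroup K) ≃* QuaternionGroup 4)

/-- `G` has a quotient isomorphic to the binary octahedral group. -/
def HasBinaryOctahedralQuotient (G : Type) [Group G] : Prop :=
  ∃ (K : Type) (instK : Group K),
    letI := instK
    ∃ φ : G →* K, Function.Surjective φ ∧ IsBinaryOctahedral K


theorem fpf_sum_zero {G : Type} [Group G] {F : Type} [Field F] {V : Type}
    [AddCommGroup V] [Module F V]
    (ρ : G →* (V ≃ₗ[F] V))
    (hfpf : ∀ g : G, g ≠ 1 → ∀ v : V, v ≠ 0 → ρ g v ≠ v) (g : G) (hg : g ≠ 1) (n : ℕ)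
    (hn : g ^ n = 1) (v : V) : ∑ k ∈ Finset.range n, ρ (g ^ k) v = 0 := by
  by_contra h
  apply hfpf g hg _ h
  rw [map_sum]
  have h1 : ∀ k, ρ g (ρ (g ^ k) v) = ρ (g ^ (k+1)) v := by
    intro k
    rw [pow_succ', map_mul]; rfl
  simp only [h1]
  have h2 := Finset.sum_range_succ (fun k => ρ (g ^ k) v) n
  have h3 := Finset.sum_range_succ' (fun k => ρ (g ^ k) v) n
  rw [h2] at h3
  simp only [hn, pow_zero] at h3
  exact (add_right_cancel h3).symm

/-- Involutions act as `-1`. -/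
theorem fpf_inv {G : Type} [Group G] {F : Type} [Field F] {V : Type}
    [AddCommGroup V] [Module F V]
    (ρ : G →* (V ≃ₗ[F] V)) (hfaithful : Function.Injective ρ)
    (hfpf : ∀ g : G, g ≠ 1 → ∀ v : V, v ≠ 0 → ρ g v ≠ v) (x y : G) (hx : x ≠ 1) (hy : y ≠ 1)
    (hx2 : x * x = 1) (hy2 : y * y = 1) : x = y := by
  apply hfaithful
  ext v
  have h1 := fpf_sum_zero ρ hfpf x hx 2 (by rw [pow_two, hx2]) v
  have h2 := fpf_sum_zero ρ hfpf y hy 2 (by rw [pow_two, hy2]) v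
  simp only [Finset.sum_range_succ, Finset.sum_range_zero, pow_zero, pow_one, map_one, zero_add] at h1 h2
  rw [← h2] at h1
  exact add_left_cancel h1

theorem fpf_prime {G : Type} [Group G] {F : Type} [Field F] {V : Type}
    [AddCommGroup V] [Module F V] [Finite V]
    (ρ : G →* (V ≃ₗ[F] V)) (hfaithful : Function.Injective ρ)
    (hfpf : ∀ g : G, g ≠ 1 → ∀ v : V, v ≠ 0 → ρ g v ≠ v) (p : ℕ) (hp : p.Prime) (x y : G)
    (hxy : x * y = y * x) (hx : x ^ p = 1) (hy : y ^ p = 1) (hx1 : x ≠ 1) :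
    y ∈ Subgroup.zpowers x := by
  by_contra hyx
  have hc : Commute y x := hxy.symm
  -- p annihilates V
  have hpV : ∀ v : V, p • v = 0 := by
    intro v
    have key : ∑ j ∈ Finset.range p, ∑ k ∈ Finset.range p, ρ ((y * x ^ j) ^ k) v = 0 := by
      apply Finset.sum_eq_zero
      intro j _
      apply fpf_sum_zero ρ hfpf
      · intro h
        apply hyx
        rw [eq_inv_of_mul_eq_one_left h]
        exact inv_mem (pow_mem (Subgroup.mem_zpowers x) j)
      · rw [(hc.pow_right j).mul_pow, hy, ← pow_mul, mul_comm j p, pow_mul, hx, one_pow, one_mul]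
    rw [Finset.sum_comm] at key
    have h0 : ∀ k ∈ Finset.range p, ∑ j ∈ Finset.range p, ρ ((y * x ^ j) ^ k) v =
        if k = 0 then p • v else 0 := by
      intro k hk
      split_ifs with h
      · subst h; simp
      · have : ∀ j, ρ ((y * x ^ j) ^ k) v = ρ (y ^ k) (ρ ((x ^ k) ^ j) v) := by
          intro j
          rw [(hc.pow_right j).mul_pow, map_mul, ← pow_mul, ← pow_mul, mul_comm j k]; rfl
        simp only [this]
        rw [← map_sum, fpf_sum_zero ρ hfpf (x ^ k) _ p, map_zero]
        · rw [← pow_mul, mul_comm, pow_mul, hx, one_pow]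
        · intro hk1
          have : orderOf x = p := by
            haveI := Fact.mk hp
            exact orderOf_eq_prime hx hx1
          have h2 := orderOf_dvd_of_pow_eq_one hk1
          rw [this] at h2
          have := Nat.le_of_dvd (Nat.pos_of_ne_zero h) h2
          simp at hk
          omega
    rw [Finset.sum_congr rfl h0] at key
    simpa [hp.pos] using key
  -- now a p-element has a fixed point
  have hV : ∃ v : V, v ≠ 0 := by
    by_contra h
    push Not at h
    apply hx1
    apply hfaithful
    ext v
    rw [h (ρ x v), h (ρ 1 v)]
  obtain ⟨v, hv⟩ := hV
  -- minimal k with (x-1)^k v = 0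
  let T : Module.End F V := (ρ x : V ≃ₗ[F] V).toLinearMap - 1
  have hinj : Function.Injective T := by
    rw [← LinearMap.ker_eq_bot, LinearMap.ker_eq_bot']
    intro w hw
    by_contra hw0
    apply hfpf x hx1 w hw0
    simpa [T, sub_eq_zero] using hw
  have hT : T ^ p = 0 := by
    have hcom : Commute ((ρ x : V ≃ₗ[F] V).toLinearMap : Module.End F V) 1 := Commute.one_right _
    obtain ⟨r, hr⟩ := (Commute.neg_right hcom).exists_add_pow_prime_eq hp
    have hr' : T ^ p = ((ρ x : V ≃ₗ[F] V).toLinearMap : Module.End F V) ^ p + (-1) ^ p + (p : Module.End F V) * (((ρ x : V ≃ₗ[F] V).toLinearMap : Module.End F V) * (-1) * r) := by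
      rw [show T = ((ρ x : V ≃ₗ[F] V).toLinearMap : Module.End F V) + (-1) from sub_eq_add_neg _ _, hr]
      simp only [mul_assoc]
    have hp0 : (p : Module.End F V) = 0 := by
      ext w
      simp [hpV]
    have hxp : ((ρ x : V ≃ₗ[F] V).toLinearMap : Module.End F V) ^ p = 1 := by
      have : ∀ n, ((ρ x : V ≃ₗ[F] V).toLinearMap : Module.End F V) ^ n = (ρ (x ^ n)).toLinearMap := by
        intro n
        induction n with
        | zero => simp; rfl
        | succ n ih => rw [pow_succ, ih, pow_succ, map_mul]; rfl
      rw [this, hx, map_one]; rfl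
    rw [hr', hp0, zero_mul, add_zero, hxp]
    rcases hp.eq_two_or_odd' with h | h
    · subst h
      have : ((2:ℕ) : Module.End F V) = 0 := hp0
      rw [neg_one_sq, one_add_one_eq_two]; exact_mod_cast this
    · rw [h.neg_one_pow]; simp
  have : Function.Injective (T ^ p) := by
    rw [Module.End.coe_pow]; exact hinj.iterate p
  exact hv (this (by rw [hT]; simp))


theorem class2_pow {P : Type} [Group P] (y w t : P) (ht : ∀ g : P, t * g = g * t)
    (h : w * y = t * y * w) (n : ℕ) : (y * w) ^ n = y ^ n * w ^ n * t ^ (n.choose 2) := by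
  have htc : ∀ g : P, ∀ m : ℕ, t ^ m * g = g * t ^ m := by
    intro g m
    exact (Commute.pow_left (ht g) m)
  have h1 : ∀ n : ℕ, w ^ n * y = t ^ n * y * w ^ n := by
    intro n
    induction n with
    | zero => simp
    | succ n ih =>
      calc w ^ (n+1) * y = w ^ n * (w * y) := by rw [pow_succ, mul_assoc]
        _ = w ^ n * (t * y * w) := by rw [h]
        _ = (w ^ n * t) * y * w := by simp only [mul_assoc]
        _ = t * (w ^ n * y) * w := by rw [← ht]; simp only [mul_assoc]
        _ = t ^ (n+1) * y * w ^ (n+1) := by rw [ih, pow_succ' t, pow_succ w]; simp only [mul_assoc]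
  induction n with
  | zero => simp
  | succ n ih =>
    have hc : (n+1).choose 2 = n + n.choose 2 := by
      rw [Nat.choose_succ_succ' n 1, Nat.choose_one_right]
    calc (y * w) ^ (n+1) = y ^ n * w ^ n * (t ^ (n.choose 2) * (y * w)) := by
          rw [pow_succ, ih]; simp only [mul_assoc]
      _ = y ^ n * (w ^ n * y) * w * t ^ (n.choose 2) := by rw [htc]; simp only [mul_assoc]
      _ = y ^ n * (t ^ n * (y * w ^ n * w)) * t ^ (n.choose 2) := by rw [h1]; simp only [mul_assoc]
      _ = y ^ (n+1) * w ^ (n+1) * t ^ ((n+1).choose 2) := by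
          rw [htc, hc, pow_add t, pow_succ y, pow_succ w]; simp only [mul_assoc]

theorem coatom_card {p : ℕ} [hp : Fact p.Prime] {P : Type} [Group P] [Finite P]
    (hP : IsPGroup p P) (M : Subgroup P) [M.Normal] (hM : IsCoatom M) : Nat.card (P ⧸ M) = p := by
  have hQ : IsPGroup p (P ⧸ M) := hP.to_quotient M
  have hne : Nontrivial (P ⧸ M) := by
    rw [QuotientGroup.nontrivial_iff]; exact hM.1
  have hd : p ∣ Nat.card (P ⧸ M) := by
    rcases hQ.card_eq_or_dvd with h | h
    · exact absurd h Finite.one_lt_card.ne'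
    · exact h
  obtain ⟨q, hq⟩ := exists_prime_orderOf_dvd_card' p hd
  have h1 : M < (Subgroup.zpowers q).comap (QuotientGroup.mk' M) := by
    refine lt_of_le_of_ne ?_ ?_
    · intro m hm
      rw [Subgroup.mem_comap]
      have : QuotientGroup.mk' M m = 1 := (QuotientGroup.eq_one_iff m).2 hm
      rw [this]; exact one_mem _
    · intro h
      obtain ⟨g, rfl⟩ := QuotientGroup.mk_surjective q
      have : g ∈ M := by rw [h]; exact Subgroup.mem_zpowers _
      rw [(QuotientGroup.eq_one_iff g).2 this, orderOf_one] at hq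
      exact hp.out.one_lt.ne hq
  have h2 := hM.2 _ h1
  have h3 : Subgroup.zpowers q = ⊤ := by
    rw [eq_top_iff]
    intro g _
    obtain ⟨g, rfl⟩ := QuotientGroup.mk_surjective g
    have : g ∈ (Subgroup.zpowers q).comap (QuotientGroup.mk' M) := by rw [h2]; trivial
    exact this
  rw [← hq, ← Nat.card_zpowers, h3, Subgroup.card_top]

theorem cyc_aux (p : ℕ) [hp : Fact p.Prime] : ∀ n : ℕ, ∀ (P : Type) [Group P] [Finite P],
    Nat.card P = n → IsPGroup p P →
    (∀ x y : P, x * y = y * x → x ^ p = 1 → y ^ p = 1 → x ≠ 1 → y ∈ Subgroup.zpowers x) →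
    (p ≠ 2 ∨ ∀ x y : P, x * y = y * x) → IsCyclic P := by
  intro n
  induction n using Nat.strong_induction_on with
  | _ n ih =>
  intro P _ _ hn hP hu hor
  by_contra hnc
  have hsub : ∀ H : Subgroup P, H ≠ ⊤ → ∀ x ∈ H, ∀ y ∈ H, x * y = y * x := by
    intro H hH x hx y hy
    have hcard : Nat.card H < n := by
      rw [← hn]
      refine lt_of_le_of_ne (Subgroup.card_le_card_group H) ?_
      intro h
      exact hH (Subgroup.eq_top_of_card_eq H h)
    have hcy : IsCyclic H := by
      refine ih _ hcard H rfl (hP.to_subgroup H) ?_ ?_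
      · intro a b hab ha hb ha1
        obtain ⟨k, hk⟩ := hu a b (by simpa using congrArg Subtype.val hab)
          (by simpa using congrArg Subtype.val ha) (by simpa using congrArg Subtype.val hb)
          (by simpa using ha1)
        exact ⟨k, by ext; simpa using hk⟩
      · rcases hor with h | h
        · exact Or.inl h
        · right; intro a b; ext; exact h a b
    have := hcy.isMulCommutative.is_comm.comm (⟨x, hx⟩ : H) ⟨y, hy⟩
    simpa using congrArg Subtype.val this
  have hnt : Nontrivial P := by
    by_contra h
    rw [not_nontrivial_iff_subsingleton] at h
    exact hnc inferInstance
  have hnil : Group.IsNilpotent P := hP.isNilpotent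
  have hbt : (⊥ : Subgroup P) ≠ ⊤ := bot_ne_top
  obtain ⟨M, hM, -⟩ := (eq_top_or_exists_le_coatom (⊥ : Subgroup P)).resolve_left hbt
  obtain ⟨x, hx⟩ : ∃ x, x ∉ M := by
    by_contra h; push Not at h
    exact hM.1 (eq_top_iff.2 fun g _ => h g)
  have hxt : Subgroup.zpowers x ≠ ⊤ := by
    intro h
    exact hnc ⟨x, fun g => show g ∈ Subgroup.zpowers x by rw [h]; trivial⟩
  obtain ⟨L, hL, hxL⟩ := (eq_top_or_exists_le_coatom (Subgroup.zpowers x)).resolve_left hxt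
  have hMn : M.Normal := Subgroup.NormalizerCondition.normal_of_coatom M Group.normalizerCondition_of_isNilpotent hM
  have hLn : L.Normal := Subgroup.NormalizerCondition.normal_of_coatom L Group.normalizerCondition_of_isNilpotent hL
  have hMc := coatom_card hP M hM
  have hLc := coatom_card hP L hL
  have hxL' : x ∈ L := hxL (Subgroup.mem_zpowers x)
  have hML : ¬ L ≤ M := fun h => hx (h hxL')
  have hML' : ¬ M ≤ L := by
    intro h
    rcases hM.le_iff.1 h with h | h
    · exact hL.1 h
    · exact hML h.le
  have hsup : M ⊔ L = ⊤ := by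
    apply hM.2
    refine lt_of_le_of_ne le_sup_left ?_
    intro h
    exact hML (by rw [h]; exact le_sup_right)
  have hcen : ∀ z ∈ M ⊓ L, ∀ g : P, z * g = g * z := by
    intro z hz g
    have : M ⊔ L ≤ Subgroup.centralizer {z} := by
      refine sup_le ?_ ?_
      · intro m hm
        rw [Subgroup.mem_centralizer_singleton_iff]
        exact hsub M hM.1 _ hm _ hz.1
      · intro m hm
        rw [Subgroup.mem_centralizer_singleton_iff]
        exact hsub L hL.1 _ hm _ hz.2
    rw [hsup] at this
    have h2 := this (Subgroup.mem_top g)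
    rw [Subgroup.mem_centralizer_singleton_iff] at h2
    exact h2.symm
  have hpow : ∀ g : P, g ^ p ∈ M ⊓ L := by
    intro g
    constructor
    · show g ^ p ∈ M
      rw [← QuotientGroup.eq_one_iff, QuotientGroup.mk_pow, ← hMc, pow_card_eq_one']
    · show g ^ p ∈ L
      rw [← QuotientGroup.eq_one_iff, QuotientGroup.mk_pow, ← hLc, pow_card_eq_one']
  have hcomm : ∀ y w : P, w * y * w⁻¹ * y⁻¹ ∈ M ⊓ L := by
    have hcy : ∀ (H : Subgroup P) [H.Normal], Nat.card (P ⧸ H) = p → ∀ y w : P, w * y * w⁻¹ * y⁻¹ ∈ H := by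
      intro H _ hH y w
      have := (isCyclic_of_prime_card hH).isMulCommutative.is_comm.comm (w : P ⧸ H) (y : P ⧸ H)
      rw [← QuotientGroup.eq_one_iff]
      simp only [QuotientGroup.mk_mul, QuotientGroup.mk_inv, this]
      group
    intro y w
    exact ⟨hcy M hMc y w, hcy L hLc y w⟩
  have hmul : ∀ y w : P, (y * w) ^ p = y ^ p * w ^ p := by
    intro y w
    rcases hor with h | h
    · have ht := hcen _ (hcomm y w)
      set t := w * y * w⁻¹ * y⁻¹ with htdef
      have hw : w * y = t * y * w := by rw [htdef]; group
      rw [class2_pow y w t ht hw p]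
      have htp : t ^ p = 1 := by
        have h1 : (t * y) ^ p = t ^ p * y ^ p := (show Commute t y from ht y).mul_pow p
        have h2 : t * y = w * y * w⁻¹ := by rw [htdef]; group
        rw [h2, conj_pow, ← hcen _ (hpow y) w, mul_inv_cancel_right] at h1
        have : 1 * y ^ p = t ^ p * y ^ p := by rw [one_mul]; exact h1
        exact (mul_right_cancel this).symm
      have hd : p ∣ p.choose 2 := hp.out.dvd_choose_self (by norm_num)
        (lt_of_le_of_ne hp.out.two_le (Ne.symm h))
      obtain ⟨k, hk⟩ := hd
      rw [hk, pow_mul, htp, one_pow, mul_one]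
    · exact (show Commute y w from h y w).mul_pow p
  let f : P →* P := MonoidHom.mk' (fun y => y ^ p) hmul
  have hr : f.range ≤ M ⊓ L := by
    rintro _ ⟨y, rfl⟩
    exact hpow y
  -- central element of order p
  have hkerle : Nat.card f.ker ≤ p := by
    have : Nontrivial (Subgroup.center P) := hP.center_nontrivial
    have hcp : IsPGroup p (Subgroup.center P) := hP.to_subgroup _
    have hd : p ∣ Nat.card (Subgroup.center P) := by
      rcases hcp.card_eq_or_dvd with h | h
      · exact absurd h Finite.one_lt_card.ne'
      · exact h
    obtain ⟨q, hq⟩ := exists_prime_orderOf_dvd_card' p hd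
    have hq' : orderOf (q : P) = p := by rw [Subgroup.orderOf_coe, hq]
    have hle : f.ker ≤ Subgroup.zpowers (q : P) := by
      intro y hy
      refine hu q y ?_ ?_ hy ?_
      · exact (Subgroup.mem_center_iff.1 q.2 y).symm
      · rw [← hq']; exact pow_orderOf_eq_one _
      · intro h
        rw [h, orderOf_one] at hq'
        exact hp.out.one_lt.ne hq'
    calc Nat.card f.ker ≤ Nat.card (Subgroup.zpowers (q : P)) := Subgroup.card_le_of_le hle
      _ = p := by rw [Nat.card_zpowers, hq']
  have hcard1 : Nat.card P = Nat.card f.range * Nat.card f.ker := by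
    rw [Subgroup.card_eq_card_quotient_mul_card_subgroup f.ker,
      Nat.card_congr (QuotientGroup.quotientKerEquivRange f).toEquiv]
  have hcard2 : Nat.card P = p * Nat.card M := by
    rw [Subgroup.card_eq_card_quotient_mul_card_subgroup M, hMc]
  obtain ⟨a, ha⟩ := IsPGroup.iff_card.1 (hP.to_subgroup M)
  obtain ⟨b, hb⟩ := IsPGroup.iff_card.1 (hP.to_subgroup (M ⊓ L))
  have hlt : Nat.card (M ⊓ L : Subgroup P) < Nat.card M := by
    refine lt_of_le_of_ne (Subgroup.card_le_of_le inf_le_left) ?_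
    intro h
    have := Subgroup.eq_of_le_of_card_ge (inf_le_left : M ⊓ L ≤ M) h.ge
    exact hML' (inf_eq_left.1 this)
  rw [ha, hb, Nat.pow_lt_pow_iff_right hp.out.one_lt] at hlt
  have h1 : Nat.card f.range ≤ p ^ b := hb ▸ Subgroup.card_le_of_le hr
  have h2 : p ^ (b+1) ≤ p ^ a := Nat.pow_le_pow_right hp.out.pos hlt
  have h3 : Nat.card P ≤ p ^ b * p := by rw [hcard1]; exact Nat.mul_le_mul h1 hkerle
  rw [hcard2, ha, ← pow_succ] at h3
  have h4 : 0 < p ^ a := pow_pos hp.out.pos a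
  have h5 := hp.out.two_le
  nlinarith


theorem nilp_step {S : Type} [Group S] [Group.IsNilpotent S] (A C : Subgroup S) [C.Normal]
    (h : ¬ C ≤ A) : ∃ x ∈ C, x ∉ A ∧ ∀ g : S, g * x * g⁻¹ * x⁻¹ ∈ A := by
  obtain ⟨n, hn⟩ := Subgroup.nilpotent_iff_lowerCentralSeries.1 (inferInstance : Group.IsNilpotent S)
  let c : ℕ → Subgroup S := fun i => (fun K => ⁅K, (⊤ : Subgroup S)⁆)^[i] C
  have hc : ∀ i, c (i+1) = ⁅c i, ⊤⁆ := fun i => Function.iterate_succ_apply' _ _ _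
  have hle : ∀ i, c i ≤ Subgroup.lowerCentralSeries ⊤ i := by
    intro i
    induction i with
    | zero => exact le_top
    | succ i ih => rw [hc]; exact Subgroup.commutator_mono ih le_rfl
  have hnor : ∀ i, (c i).Normal ∧ c i ≤ C := by
    intro i
    induction i with
    | zero => exact ⟨inferInstanceAs C.Normal, le_rfl⟩
    | succ i ih =>
      obtain ⟨h1, h2⟩ := ih
      rw [hc]
      exact ⟨inferInstance, (Subgroup.commutator_le_left _ _).trans h2⟩
  have hex : ∃ i, c i ≤ A := ⟨n, (hle n).trans (hn ▸ bot_le)⟩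
  classical
  obtain ⟨j, hj⟩ : ∃ j, Nat.find hex = j + 1 := by
    refine Nat.exists_eq_succ_of_ne_zero ?_
    intro h0
    have := Nat.find_spec hex
    rw [h0] at this
    exact h this
  have h1 : c (j+1) ≤ A := hj ▸ Nat.find_spec hex
  have h2 : ¬ c j ≤ A := Nat.find_min hex (by omega)
  obtain ⟨x, hx, hxA⟩ := SetLike.not_le_iff_exists.1 h2
  refine ⟨x, (hnor j).2 hx, hxA, fun g => ?_⟩
  have h3 : x * g * x⁻¹ * g⁻¹ ∈ c (j+1) := by
    rw [hc]; exact Subgroup.commutator_mem_commutator hx (Subgroup.mem_top g)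
  have h4 : g * x * g⁻¹ * x⁻¹ = (x * g * x⁻¹ * g⁻¹)⁻¹ := by group
  rw [h4]; exact inv_mem (h1 h3)

theorem exists_max_abelian (S : Type) [Group S] [Finite S] [Group.IsNilpotent S] :
    ∃ A : Subgroup S, A.Normal ∧ (∀ x ∈ A, ∀ y ∈ A, x * y = y * x) ∧
      ∀ g : S, (∀ x ∈ A, g * x = x * g) → g ∈ A := by
  have hfin : {A : Subgroup S | A.Normal ∧ ∀ x ∈ A, ∀ y ∈ A, x * y = y * x}.Finite := Set.toFinite _
  obtain ⟨A, ⟨hA1, hA2⟩, hmax⟩ := hfin.exists_maximal ⟨⊥, inferInstance, by simp⟩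
  refine ⟨A, hA1, hA2, ?_⟩
  by_contra hcon
  push Not at hcon
  obtain ⟨g, hg, hgA⟩ := hcon
  have hC : ¬ Subgroup.centralizer (A : Set S) ≤ A := by
    intro h
    apply hgA; apply h
    rw [Subgroup.mem_centralizer_iff]
    intro x hx; exact (hg x hx).symm
  obtain ⟨x, hxC, hxA, hx⟩ := nilp_step A (Subgroup.centralizer (A : Set S)) hC
  rw [Subgroup.mem_centralizer_iff] at hxC
  let B := Subgroup.closure ((A : Set S) ∪ {x})
  have hAB : A ≤ B := fun a ha => Subgroup.subset_closure (Or.inl ha)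
  have hxB : x ∈ B := Subgroup.subset_closure (Or.inr rfl)
  have hBn : B.Normal := by
    refine ⟨fun b hb g => ?_⟩
    induction hb using Subgroup.closure_induction with
    | mem y hy =>
      rcases hy with hy | rfl
      · exact hAB (hA1.conj_mem y hy g)
      · have := mul_mem (hAB (hx g)) hxB
        simpa using this
    | one => simp
    | mul y z _ _ h1 h2 =>
      have := mul_mem h1 h2
      simpa [mul_assoc] using this
    | inv y _ h1 =>
      have := inv_mem h1
      simpa [mul_assoc] using this
  have hgen : ∀ y ∈ (A : Set S) ∪ {x}, ∀ z ∈ (A : Set S) ∪ {x}, y * z = z * y := by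
    rintro y (hy | rfl) z (hz | rfl)
    · exact hA2 y hy z hz
    · exact hxC y hy
    · exact (hxC z hz).symm
    · rfl
  have hBc : ∀ y ∈ B, ∀ z ∈ B, y * z = z * y := by
    intro y hy z hz
    have h1 : B ≤ Subgroup.centralizer ((A : Set S) ∪ {x}) := by
      rw [Subgroup.closure_le]
      intro y hy
      rw [SetLike.mem_coe, Subgroup.mem_centralizer_iff]
      intro z hz
      exact hgen z hz y hy
    have h2 : B ≤ Subgroup.centralizer {y} := by
      rw [Subgroup.closure_le]
      intro w hw
      rw [SetLike.mem_coe, Subgroup.mem_centralizer_singleton_iff]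
      exact (Subgroup.mem_centralizer_iff.1 (h1 hy) w hw)
    exact ((Subgroup.mem_centralizer_singleton_iff.1 (h2 hz))).symm
  exact hxA (hmax (y := B) ⟨hBn, hBc⟩ hAB hxB)

theorem num_lemma (n : ℕ) (k m : ℤ) (h1 : (2:ℤ) ^ n ∣ (k - 1) * (k + 1))
    (h2 : (2:ℤ) ^ n ∣ m * (k - 1)) (h3 : ∀ t : ℤ, ¬ (2:ℤ) ^ n ∣ t * (k + 1) + m)
    (h4 : ¬ (2:ℤ) ^ n ∣ k - 1) : (2:ℤ) ^ n ∣ k + 1 := by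
  obtain ⟨r, rfl⟩ : ∃ r, n = r + 1 := by
    refine Nat.exists_eq_succ_of_ne_zero ?_
    rintro rfl; simp at h4
  have hkodd : k % 2 = 1 := by
    have : (2:ℤ) ∣ (k-1) * (k+1) := (Dvd.intro_left _ (pow_succ (2:ℤ) r).symm).trans h1
    rcases Int.prime_two.dvd_or_dvd this with h | h <;> omega
  have h20 : (2:ℤ) ≠ 0 := by norm_num
  have hcop : ∀ u : ℤ, u % 2 = 1 → ∀ s : ℕ, IsCoprime ((2:ℤ) ^ s) u := by
    intro u hu s
    apply IsCoprime.pow_left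
    exact ⟨-(u/2), 1, by omega⟩
  have hred : ∀ u w : ℤ, u % 2 = 1 → (2:ℤ) ^ (r+1) ∣ (2 * u) * w → (2:ℤ) ^ r ∣ w := by
    intro u w hu h
    rw [pow_succ', mul_assoc] at h
    exact (hcop u hu r).dvd_of_dvd_mul_left (Int.dvd_of_mul_dvd_mul_left h20 h)
  by_cases h : k % 4 = 3
  · obtain ⟨u, hu⟩ : ∃ u, k - 1 = 2 * u := ⟨(k-1)/2, by omega⟩
    have huo : u % 2 = 1 := by omega
    rw [hu] at h1 h2
    obtain ⟨w, hw⟩ := hred u _ huo h1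
    rw [mul_comm] at h2
    obtain ⟨l, hl⟩ := hred u _ huo h2
    rcases Int.emod_two_eq_zero_or_one w with hw2 | hw2
    · rw [hw, pow_succ]
      exact mul_dvd_mul_left _ (Int.dvd_of_emod_eq_zero hw2)
    · exfalso
      apply h3 l
      have : l * (k+1) + m = 2 ^ r * ((w + 1) * l) := by rw [hw, hl]; ring
      rw [this, pow_succ]
      exact mul_dvd_mul_left _ (Dvd.dvd.mul_right (by omega) _)
  · exfalso
    obtain ⟨u, hu⟩ : ∃ u, k + 1 = 2 * u := ⟨(k+1)/2, by omega⟩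
    have huo : u % 2 = 1 := by omega
    rw [hu, mul_comm] at h1
    obtain ⟨w, hw⟩ := hred u _ huo h1
    have hwo : w % 2 = 1 := by
      rcases Int.emod_two_eq_zero_or_one w with hw2 | hw2
      · exfalso; apply h4
        rw [hw, pow_succ]
        exact mul_dvd_mul_left _ (Int.dvd_of_emod_eq_zero hw2)
      · exact hw2
    have hm : m % 2 = 0 := by
      rw [hw, pow_succ, ← mul_assoc, mul_comm m, mul_assoc] at h2
      have h5 := Int.dvd_of_mul_dvd_mul_left (by positivity) h2
      rcases Int.prime_two.dvd_or_dvd h5 with h | h <;> omega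
    obtain ⟨l, hl⟩ : ∃ l, m = 2 * l := ⟨m/2, by omega⟩
    obtain ⟨α, β, hαβ⟩ := hcop u huo r
    apply h3 (- l * β)
    have : -l * β * (k+1) + m = 2 ^ (r+1) * (l * α) := by
      rw [hu, hl, pow_succ]
      linear_combination (-2 * l) * hαβ
    rw [this]
    exact dvd_mul_right _ _

theorem quat_struct (S : Type) [Group S] [Finite S] (hS : IsPGroup 2 S)
    (hu : ∀ x y : S, x ≠ 1 → y ≠ 1 → x * x = 1 → y * y = 1 → x = y) :
    IsCyclic S ∨ ∃ (n : ℕ) (a x : S), 2 ≤ n ∧ orderOf a = 2 ^ n ∧ x ∉ Subgroup.zpowers a ∧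
      x * a * x⁻¹ = a⁻¹ ∧ x * x = a ^ (2 ^ (n - 1)) ∧
      ∀ g : S, g ∈ Subgroup.zpowers a ∨ g * x ∈ Subgroup.zpowers a := by
  have : Fact (Nat.Prime 2) := ⟨Nat.prime_two⟩
  have hnil : Group.IsNilpotent S := hS.isNilpotent
  obtain ⟨A, hAn, hAc, hAmax⟩ := exists_max_abelian S
  have hAcy : IsCyclic A := by
    refine cyc_aux 2 _ A rfl (hS.to_subgroup A) ?_ (Or.inr fun x y => Subtype.ext (hAc x x.2 y y.2))
    intro x y _ hx hy hx1
    by_cases hy1 : y = 1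
    · rw [hy1]; exact one_mem _
    · have : (x : S) = y := by
        apply hu
        · simpa using hx1
        · simpa using hy1
        · rw [pow_two] at hx; simpa using congrArg Subtype.val hx
        · rw [pow_two] at hy; simpa using congrArg Subtype.val hy
      rw [show y = x from Subtype.ext this.symm]
      exact Subgroup.mem_zpowers x
  obtain ⟨⟨a, haA⟩, hgen⟩ := hAcy
  have hA : ∀ g, g ∈ A ↔ ∃ k : ℤ, a ^ k = g := by
    intro g
    constructor
    · intro hg
      obtain ⟨k, hk⟩ := hgen ⟨g, hg⟩
      exact ⟨k, by simpa using congrArg Subtype.val hk⟩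
    · rintro ⟨k, rfl⟩; exact zpow_mem haA k
  have hcent : ∀ g : S, g * a = a * g → g ∈ A := by
    intro g hg
    apply hAmax
    intro x hx
    obtain ⟨k, rfl⟩ := (hA x).1 hx
    exact (show Commute g a from hg).zpow_right k
  obtain ⟨n, hn⟩ := IsPGroup.iff_orderOf.1 hS a
  have hdvd : ∀ k : ℤ, a ^ k = 1 ↔ (2:ℤ) ^ n ∣ k := by
    intro k
    rw [← orderOf_dvd_iff_zpow_eq_one, hn]; norm_cast
  have hconj : ∀ y : S, ∃ k : ℤ, ∀ m : ℤ, y * a ^ m * y⁻¹ = a ^ (k * m) := by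
    intro y
    obtain ⟨k, hk⟩ := (hA _).1 (hAn.conj_mem a haA y)
    refine ⟨k, fun m => ?_⟩
    rw [zpow_mul, hk, conj_zpow]
  -- main claim
  have hinv : ∀ y : S, y ∉ A → y * y ∈ A → y * a * y⁻¹ = a⁻¹ := by
    intro y hyA hy2
    obtain ⟨k, hk⟩ := hconj y
    obtain ⟨m, hm⟩ := (hA _).1 hy2
    have key : (2:ℤ)^n ∣ k + 1 := by
      apply num_lemma n k m
      · rw [← hdvd]
        have e1 : (y * y) * a * (y * y)⁻¹ = a := by
          rw [hAc _ hy2 a haA]; group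
        have e2 : (y * y) * a * (y * y)⁻¹ = a ^ (k * k) := by
          calc (y * y) * a * (y * y)⁻¹ = y * (y * a ^ (1:ℤ) * y⁻¹) * y⁻¹ := by group
            _ = a ^ (k * k) := by rw [hk, hk]; ring_nf
        rw [e1] at e2
        rw [show (k-1)*(k+1) = k * k - 1 by ring, zpow_sub, ← e2]; simp
      · rw [← hdvd]
        have e1 : y * (y * y) * y⁻¹ = y * y := by group
        rw [← hm, hk] at e1
        rw [show m * (k-1) = k * m - m by ring, zpow_sub, e1]; simp
      · intro t ht
        rw [← hdvd] at ht
        have e1 : (a ^ t * y) * (a ^ t * y) = 1 := by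
          calc (a ^ t * y) * (a ^ t * y) = a ^ t * (y * a ^ t * y⁻¹) * (y * y) := by group
            _ = a ^ (t * (k+1) + m) := by rw [hk, ← hm, ← zpow_add, ← zpow_add]; ring_nf
            _ = 1 := ht
        have hne : a ^ t * y ∉ A := by
          intro h
          exact hyA (by simpa using mul_mem (inv_mem (zpow_mem haA t)) h)
        have hn0 : n ≠ 0 := by
          rintro rfl
          rw [pow_zero, orderOf_eq_one_iff] at hn
          exact hyA (hcent y (by rw [hn]; simp))
        obtain ⟨r, rfl⟩ := Nat.exists_eq_succ_of_ne_zero hn0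
        have := hu (a ^ t * y) (a ^ ((2:ℤ) ^ r)) (fun h => hne (h ▸ one_mem _)) ?_ e1 ?_
        · apply hne; rw [this]; exact zpow_mem haA _
        · rw [Ne, hdvd, pow_succ]
          intro h
          have := Int.le_of_dvd (by positivity) h
          have h2 : (0:ℤ) < 2 ^ r := by positivity
          linarith
        · rw [← zpow_add, hdvd, pow_succ]
          exact ⟨1, by ring⟩
      · rw [← hdvd]
        intro h
        apply hyA
        apply hcent
        have e := hk 1
        rw [zpow_one, mul_one] at e
        rw [zpow_sub, zpow_one, mul_inv_eq_one] at h
        rw [h] at e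
        exact mul_inv_eq_iff_eq_mul.1 e
    have e := hk 1
    rw [zpow_one, mul_one] at e
    rw [e, eq_inv_iff_mul_eq_one, ← zpow_add_one, hdvd]
    exact key
  have hn2 : ∀ y : S, y ∉ A → y * a * y⁻¹ = a⁻¹ → 2 ≤ n := by
    intro y hyA hy
    by_contra hlt
    apply hyA
    apply hcent
    have : a * a = 1 := by
      rw [← pow_two]
      apply orderOf_dvd_iff_pow_eq_one.1
      rw [hn]
      have : n = 0 ∨ n = 1 := by omega
      rcases this with rfl | rfl <;> norm_num
    rw [← eq_inv_of_mul_eq_one_left this] at hy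
    exact mul_inv_eq_iff_eq_mul.1 hy
  have hsq : ∀ g : S, g ∉ A → g * g ∈ A := by
    intro g hg
    by_contra hgg
    obtain ⟨N, hN⟩ := hS g
    have hex : ∃ j, g ^ (2 ^ j) ∈ A := ⟨N, by rw [hN]; exact one_mem _⟩
    classical
    obtain ⟨j, hj⟩ : ∃ j, Nat.find hex = j + 2 := by
      have h0 : Nat.find hex ≠ 0 := by
        intro h; have := Nat.find_spec hex; rw [h] at this; simp at this; exact hg this
      have h1 : Nat.find hex ≠ 1 := by
        intro h; have := Nat.find_spec hex; rw [h] at this; simp [pow_two] at this; exact hgg this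
      exact ⟨Nat.find hex - 2, by omega⟩
    have h1 : g ^ (2 ^ (j+2)) ∈ A := hj ▸ Nat.find_spec hex
    have h2 : g ^ (2 ^ (j+1)) ∉ A := Nat.find_min hex (by omega)
    set h := g ^ (2 ^ j) with hh
    have e1 : g ^ (2 ^ (j+1)) = h * h := by rw [hh, ← pow_add]; ring_nf
    have e2 : g ^ (2 ^ (j+2)) = (h * h) * (h * h) := by rw [← e1, ← pow_add]; ring_nf
    rw [e1] at h2
    rw [e2] at h1
    have h3 := hinv _ h2 h1
    have h4 := hn2 _ h2 h3
    obtain ⟨k, hk⟩ := hconj h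
    have e3 : (h * h) * a * (h * h)⁻¹ = a ^ (k * k) := by
      calc (h * h) * a * (h * h)⁻¹ = h * (h * a ^ (1:ℤ) * h⁻¹) * h⁻¹ := by group
        _ = a ^ (k * k) := by rw [hk, hk]; ring_nf
    rw [h3, eq_comm, eq_inv_iff_mul_eq_one, ← zpow_add_one, hdvd] at e3
    have h5 : (4:ℤ) ∣ k * k + 1 := by
      refine Dvd.dvd.trans ?_ e3
      obtain ⟨r, rfl⟩ := Nat.exists_eq_add_of_le h4
      exact ⟨2 ^ r, by rw [pow_add]; norm_num⟩
    rcases Int.even_or_odd' k with ⟨u, hu | hu⟩ <;> rw [hu] at h5 <;> ring_nf at h5 <;> omega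
  by_cases hall : ∀ g, g ∈ A
  · left
    refine ⟨a, fun g => ?_⟩
    obtain ⟨k, hk⟩ := (hA g).1 (hall g)
    exact ⟨k, hk⟩
  · right
    push Not at hall
    obtain ⟨x, hx⟩ := hall
    have hxa := hinv x hx (hsq x hx)
    have hn2' := hn2 x hx hxa
    have hmem : ∀ g, g ∈ A ↔ g ∈ Subgroup.zpowers a := fun g => by
      rw [hA, Subgroup.mem_zpowers_iff]
    refine ⟨n, a, x, hn2', hn, fun h => hx ((hmem x).2 h), hxa, ?_, ?_⟩
    · obtain ⟨m, hm⟩ := (hA _).1 (hsq x hx)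
      obtain ⟨r, rfl⟩ : ∃ r, n = r + 1 := ⟨n - 1, by omega⟩
      have hxx : x * x ≠ 1 := by
        intro h
        have := hu x (a ^ (2 ^ r)) (fun h => hx (h ▸ one_mem _)) ?_ h ?_
        · apply hx; rw [this]; exact pow_mem haA _
        · intro h
          have := orderOf_dvd_of_pow_eq_one h
          rw [hn] at this
          have := Nat.le_of_dvd (by positivity) this
          rw [pow_succ] at this
          have : 0 < 2 ^ r := by positivity
          omega
        · rw [← pow_add, ← two_mul, ← pow_succ', ← hn, pow_orderOf_eq_one]
      apply hu
      · exact hxx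
      · intro h
        have := orderOf_dvd_of_pow_eq_one h
        rw [hn] at this
        have := Nat.le_of_dvd (by positivity) this
        rw [Nat.add_sub_cancel, pow_succ] at this
        have : 0 < 2 ^ r := by positivity
        omega
      · have e1 : x * (x * x) * x⁻¹ = x * x := by group
        rw [← hm] at e1 ⊢
        rw [← conj_zpow, hxa, inv_zpow] at e1
        rw [inv_eq_iff_mul_eq_one] at e1
        exact e1
      · rw [Nat.add_sub_cancel, ← pow_add, ← two_mul, ← pow_succ', ← hn, pow_orderOf_eq_one]
    · intro g
      rw [← hmem, ← hmem]
      by_cases hg : g ∈ A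
      · exact Or.inl hg
      · right
        apply hcent
        have hga := hinv g hg (hsq g hg)
        have : (g * x) * a * (g * x)⁻¹ = a := by
          calc (g * x) * a * (g * x)⁻¹ = g * (x * a * x⁻¹) * g⁻¹ := by group
            _ = (g * a * g⁻¹)⁻¹ := by rw [hxa]; group
            _ = a := by rw [hga, inv_inv]
        exact mul_inv_eq_iff_eq_mul.1 this


theorem fitting_exists (G : Type) [Group G] [Finite G] (hsol : IsSolvable G) :
    ∃ F : Subgroup G, F.Normal ∧ Group.IsNilpotent F ∧
      ∀ g : G, (∀ x ∈ F, g * x = x * g) → g ∈ F := by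
  have hfin : {A : Subgroup G | A.Normal ∧ Group.IsNilpotent A}.Finite := Set.toFinite _
  obtain ⟨F, ⟨hF1, hF2⟩, hmax⟩ := hfin.exists_maximal ⟨⊥, inferInstance, inferInstance⟩
  refine ⟨F, hF1, hF2, ?_⟩
  by_contra hcon
  push Not at hcon
  obtain ⟨g, hg, hgF⟩ := hcon
  set C := Subgroup.centralizer (F : Set G) with hCdef
  have hC : ¬ C ≤ F := by
    intro h
    apply hgF; apply h
    rw [hCdef, Subgroup.mem_centralizer_iff]
    intro x hx; exact (hg x hx).symm
  have hCn : C.Normal := inferInstance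
  obtain ⟨n, hn⟩ := hsol.solvable
  let c : ℕ → Subgroup G := fun i => (fun K => ⁅K, K⁆)^[i] C
  have hc : ∀ i, c (i+1) = ⁅c i, c i⁆ := fun i => Function.iterate_succ_apply' _ _ _
  have hle : ∀ i, c i ≤ derivedSeries G i := by
    intro i
    induction i with
    | zero => exact le_top
    | succ i ih => rw [hc]; exact Subgroup.commutator_mono ih ih
  have hnor : ∀ i, (c i).Normal ∧ c i ≤ C := by
    intro i
    induction i with
    | zero => exact ⟨hCn, le_rfl⟩
    | succ i ih =>
      obtain ⟨h1, h2⟩ := ih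
      rw [hc]
      exact ⟨inferInstance, (Subgroup.commutator_le_left _ _).trans h2⟩
  have hex : ∃ i, c i ≤ F := ⟨n, (hle n).trans (hn ▸ bot_le)⟩
  classical
  obtain ⟨j, hj⟩ : ∃ j, Nat.find hex = j + 1 := by
    refine Nat.exists_eq_succ_of_ne_zero ?_
    intro h0
    have := Nat.find_spec hex
    rw [h0] at this
    exact hC this
  have h1 : c (j+1) ≤ F := hj ▸ Nat.find_spec hex
  have h2 : ¬ c j ≤ F := Nat.find_min hex (by omega)
  obtain ⟨hMn, hMC⟩ := hnor j
  rw [hc] at h1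
  set M := c j with hM
  have hMnil : Group.IsNilpotent M := by
    apply Subgroup.isNilpotent_of_lowerCentralSeries_eq_bot (n := 2)
    show ⁅⁅M, M⁆, M⁆ = ⊥
    rw [eq_bot_iff, ← (Subgroup.commutator_eq_bot_iff_le_centralizer (H₁ := M) (H₂ := F)).2 hMC,
      Subgroup.commutator_comm M F]
    exact Subgroup.commutator_mono h1 le_rfl
  have hcomm : ∀ (m : F) (n : M), Commute (F.subtype m) (M.subtype n) := by
    intro m n
    exact Subgroup.mem_centralizer_iff.1 (hMC n.2) m m.2
  let φ : F × M →* G := MonoidHom.noncommCoprod F.subtype M.subtype hcomm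
  have hr : φ.range = F ⊔ M := by
    rw [MonoidHom.noncommCoprod_range, Subgroup.range_subtype, Subgroup.range_subtype]
  have hsup : Group.IsNilpotent (F ⊔ M : Subgroup G) := by
    rw [← hr]
    exact Group.nilpotent_of_surjective φ.rangeRestrict φ.rangeRestrict_surjective
  exact h2 (le_sup_right.trans (hmax (y := F ⊔ M) ⟨inferInstance, hsup⟩ le_sup_left))

theorem fitting_parts {G : Type} [Group G] [Finite G] (F : Subgroup G) (hF : F.Normal)
    (hnil : Group.IsNilpotent F) : ∃ P : ℕ → Subgroup G,
      (∀ p, p.Prime → (P p).Normal ∧ IsPGroup p (P p) ∧ P p ≤ F) ∧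
      (∀ p q, p.Prime → q.Prime → p ≠ q → ∀ x ∈ P p, ∀ y ∈ P q, x * y = y * x) ∧
      (∀ g, (∀ p, p.Prime → ∀ x ∈ P p, g * x = x * g) → ∀ x ∈ F, g * x = x * g) := by
  have hS : ∀ p, p.Prime → (((default : Sylow p F) : Subgroup F).map F.subtype).Normal := by
    intro p hp
    have := Fact.mk hp
    have h1 : ((default : Sylow p F) : Subgroup F).Normal :=
      (Group.isNilpotent_of_finite_tfae.out 0 3 rfl rfl |>.mp hnil) p ‹_› _
    have h2 : ((default : Sylow p F) : Subgroup F).Characteristic := Sylow.characteristic_of_normal _ h1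
    exact ConjAct.normal_of_characteristic_of_normal
  have hP : ∀ p, p.Prime → IsPGroup p (((default : Sylow p F) : Subgroup F).map F.subtype) :=
    fun p hp => (default : Sylow p F).isPGroup'.map _
  refine ⟨fun p => ((default : Sylow p F) : Subgroup F).map F.subtype, ?_, ?_, ?_⟩
  · intro p hp
    exact ⟨hS p hp, hP p hp, Subgroup.map_subtype_le _⟩
  · intro p q hp hq hpq x hx y hy
    have := Fact.mk hp
    have := Fact.mk hq
    exact Subgroup.commute_of_normal_of_disjoint _ _ (hS p hp) (hS q hq)
      (IsPGroup.disjoint_of_ne p q hpq _ _ (hP p hp) (hP q hq)) x y hx hy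
  · intro g hg x hx
    let H : Subgroup F := (Subgroup.centralizer {g}).subgroupOf F
    have hH : H = ⊤ := by
      rw [← Subgroup.index_eq_one]
      by_contra hne
      obtain ⟨p, hp, hd⟩ := Nat.exists_prime_and_dvd hne
      have := Fact.mk hp
      have hle : ((default : Sylow p F) : Subgroup F) ≤ H := by
        intro y hy
        rw [Subgroup.mem_subgroupOf, Subgroup.mem_centralizer_singleton_iff]
        exact (hg p hp y ⟨y, hy, rfl⟩).symm
      exact (default : Sylow p F).not_dvd_index (hd.trans (Subgroup.index_dvd_of_le hle))
    have : (⟨x, hx⟩ : F) ∈ H := by rw [hH]; trivial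
    rw [Subgroup.mem_subgroupOf, Subgroup.mem_centralizer_singleton_iff] at this
    exact this.symm

theorem cyclic_normal_comm {G : Type} [Group G] (N : Subgroup G) [N.Normal] [IsCyclic N] (g : G)
    (hg : g ∈ commutator G) (x : G) (hx : x ∈ N) : g * x = x * g := by
  obtain ⟨⟨a, ha⟩, hgen⟩ := (inferInstance : IsCyclic N)
  have hA : ∀ g ∈ N, ∃ k : ℤ, a ^ k = g := by
    intro g hg
    obtain ⟨k, hk⟩ := hgen ⟨g, hg⟩
    exact ⟨k, by simpa using congrArg Subtype.val hk⟩
  have hle : commutator G ≤ Subgroup.centralizer {a} := by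
    rw [commutator_def, Subgroup.commutator_le]
    have e : ∀ g h : G, g * h * a * (g * h)⁻¹ = h * g * a * (h * g)⁻¹ := by
      intro g h
      obtain ⟨k, hk⟩ := hA _ ((inferInstance : N.Normal).conj_mem a ha g)
      obtain ⟨l, hl⟩ := hA _ ((inferInstance : N.Normal).conj_mem a ha h)
      calc g * h * a * (g * h)⁻¹ = g * (h * a * h⁻¹) * g⁻¹ := by group
        _ = h * (g * a * g⁻¹) * h⁻¹ := by
            rw [← hl, ← hk, ← conj_zpow, ← hk, ← conj_zpow, ← hl, ← zpow_mul, ← zpow_mul, mul_comm]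
        _ = _ := by group
    intro g _ h _
    rw [Subgroup.mem_centralizer_singleton_iff]
    change (g * h * g⁻¹ * h⁻¹) * a = a * (g * h * g⁻¹ * h⁻¹)
    calc (g * h * g⁻¹ * h⁻¹) * a
        = (g * h) * (g⁻¹ * h⁻¹ * a * (g⁻¹ * h⁻¹)⁻¹) * (g⁻¹ * h⁻¹) := by group
      _ = a * (g * h * g⁻¹ * h⁻¹) := by
        rw [e g⁻¹ h⁻¹]; group
  obtain ⟨k, rfl⟩ := hA x hx
  have := Subgroup.mem_centralizer_singleton_iff.1 (hle hg)
  exact (show Commute g a from this).zpow_right k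


theorem height_le_two {G : Type} [Group G] (F : Subgroup G) (hF : F.Normal)
    (hnil : Group.IsNilpotent F) (h : ⁅commutator G, (⊤ : Subgroup G)⁆ ≤ F) :
    fittingHeight G ≤ 2 := by
  obtain ⟨m, hm⟩ := (Subgroup.isNilpotent_iff_lowerCentralSeries F).1 hnil
  have hL : ∀ n, (fun K => ⁅K, F⁆)^[n] F = F.lowerCentralSeries n := by
    intro n
    induction n with
    | zero => rfl
    | succ n ih => rw [Function.iterate_succ_apply', ih]; rfl
  apply Nat.sInf_le
  refine ⟨![⊥, F, ⊤], rfl, rfl, ?_, ?_, ?_⟩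
  · intro i; fin_cases i
    · exact (inferInstance : (⊥ : Subgroup G).Normal)
    · exact hF
    · exact (inferInstance : (⊤ : Subgroup G).Normal)
  · intro i; fin_cases i
    · exact (bot_le : ⊥ ≤ F)
    · exact (le_top : F ≤ ⊤)
  · intro i; fin_cases i
    · refine (⟨m, ?_⟩ : nilpotentFactor ⊥ F)
      rw [hL, hm]
    · exact (⟨2, h⟩ : nilpotentFactor F ⊤)

theorem height_le_three {G : Type} [Group G] (F : Subgroup G) (hF : F.Normal)
    (hnil : Group.IsNilpotent F) (h : ⁅commutator G, commutator G⁆ ≤ F) :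
    fittingHeight G ≤ 3 := by
  obtain ⟨m, hm⟩ := (Subgroup.isNilpotent_iff_lowerCentralSeries F).1 hnil
  have hL : ∀ n, (fun K => ⁅K, F⁆)^[n] F = F.lowerCentralSeries n := by
    intro n
    induction n with
    | zero => rfl
    | succ n ih => rw [Function.iterate_succ_apply', ih]; rfl
  apply Nat.sInf_le
  refine ⟨![⊥, F, F ⊔ commutator G, ⊤], rfl, rfl, ?_, ?_, ?_⟩
  · intro i; fin_cases i
    · exact (inferInstance : (⊥ : Subgroup G).Normal)
    · exact hF
    · exact (inferInstance : (F ⊔ commutator G : Subgroup G).Normal)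
    · exact (inferInstance : (⊤ : Subgroup G).Normal)
  · intro i; fin_cases i
    · exact (bot_le : ⊥ ≤ F)
    · exact (le_sup_left : F ≤ F ⊔ commutator G)
    · exact (le_top : F ⊔ commutator G ≤ ⊤)
  · intro i; fin_cases i
    · refine (⟨m, ?_⟩ : nilpotentFactor ⊥ F)
      rw [hL, hm]
    · refine (⟨1, ?_⟩ : nilpotentFactor F (F ⊔ commutator G))
      show ⁅F ⊔ commutator G, F ⊔ commutator G⁆ ≤ F
      rw [Subgroup.commutator_le]
      have hq : ∀ x ∈ F ⊔ commutator G, ∃ d ∈ commutator G,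
          QuotientGroup.mk' F x = QuotientGroup.mk' F d := by
        intro x hx
        rw [Subgroup.mem_sup_of_normal_left] at hx
        obtain ⟨f, hf, d, hd, rfl⟩ := hx
        refine ⟨d, hd, ?_⟩
        rw [map_mul]
        have : QuotientGroup.mk' F f = 1 := by
          rw [QuotientGroup.mk'_apply, QuotientGroup.eq_one_iff]; exact hf
        rw [this, one_mul]
      intro x hx y hy
      obtain ⟨d, hd, hxd⟩ := hq x hx
      obtain ⟨e, he, hye⟩ := hq y hy
      have h1 := h (Subgroup.commutator_mem_commutator hd he)
      rw [← QuotientGroup.eq_one_iff] at h1 ⊢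
      change QuotientGroup.mk' F (d * e * d⁻¹ * e⁻¹) = 1 at h1
      change QuotientGroup.mk' F (x * y * x⁻¹ * y⁻¹) = 1
      simp only [map_mul, map_inv] at h1 ⊢
      rw [hxd, hye, h1]
    · refine (⟨1, ?_⟩ : nilpotentFactor (F ⊔ commutator G) ⊤)
      exact (le_sup_right : commutator G ≤ F ⊔ commutator G)


theorem zpow_congr_zmod {H : Type} [Group H] (a : H) (m : ℕ) (h : a ^ m = 1) (k l : ℤ)
    (hkl : (k : ZMod m) = l) : a ^ k = a ^ l := by
  rw [ZMod.intCast_eq_intCast_iff_dvd_sub] at hkl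
  obtain ⟨c, hc⟩ := hkl
  have : l = k + m * c := by linarith
  rw [this, zpow_add, zpow_mul, zpow_natCast, h, one_zpow, mul_one]

/-- Homomorphism out of a generalized quaternion group. -/
theorem quat_hom (n : ℕ) [NeZero n] {H : Type} [Group H] (a x : H) (h1 : a ^ (2 * n) = 1)
    (h2 : x * x = a ^ n) (h3 : x * a * x⁻¹ = a⁻¹) :
    ∃ f : QuaternionGroup n →* H, f (QuaternionGroup.a 1) = a ∧ f (QuaternionGroup.xa 0) = x ∧
      (∀ k : ℤ, f (QuaternionGroup.a k) = a ^ k) ∧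
      (∀ k : ℤ, f (QuaternionGroup.xa k) = x * a ^ k) := by
  have hne : NeZero (2 * n) := ⟨by have := NeZero.ne n; omega⟩
  have hax : ∀ k : ℤ, a ^ k * x = x * a ^ (-k) := by
    intro k
    have : x * a ^ (-k) * x⁻¹ = a ^ k := by
      rw [← conj_zpow, h3, inv_zpow, zpow_neg, inv_inv]
    rw [← this]; group
  have hc : ∀ k : ℤ, ∀ i : ZMod (2 * n), (k : ZMod (2 * n)) = i → a ^ k = a ^ (i.val : ℤ) := by
    intro k i hki
    apply zpow_congr_zmod a (2 * n) h1
    rw [hki]; simp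
  let f : QuaternionGroup n → H := fun q => match q with
    | QuaternionGroup.a i => a ^ (i.val : ℤ)
    | QuaternionGroup.xa i => x * a ^ (i.val : ℤ)
  have hfa : ∀ i, f (QuaternionGroup.a i) = a ^ (i.val : ℤ) := fun i => rfl
  have hfx : ∀ i, f (QuaternionGroup.xa i) = x * a ^ (i.val : ℤ) := fun i => rfl
  have hmul : ∀ p q, f (p * q) = f p * f q := by
    intro p q
    rcases p with i | i <;> rcases q with j | j
    · rw [QuaternionGroup.a_mul_a, hfa, hfa, hfa, ← zpow_add]
      symm; apply hc; push_cast; simp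
    · rw [QuaternionGroup.a_mul_xa, hfa, hfx, hfx, ← mul_assoc, hax, mul_assoc, ← zpow_add]
      congr 1
      symm; apply hc; push_cast; simp; ring
    · rw [QuaternionGroup.xa_mul_a, hfa, hfx, hfx, mul_assoc, ← zpow_add]
      congr 1
      symm; apply hc; push_cast; simp
    · rw [QuaternionGroup.xa_mul_xa, hfa, hfx, hfx, mul_assoc, ← mul_assoc (a ^ _) x, hax,
        mul_assoc, ← zpow_add, ← mul_assoc, h2, ← zpow_natCast, ← zpow_add]
      symm; apply hc; push_cast; simp; ring
  refine ⟨MonoidHom.mk' f hmul, ?_, ?_, ?_, ?_⟩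
  · rw [MonoidHom.mk'_apply]
    rw [hfa, ← hc 1 1 (by simp), zpow_one]
  · rw [MonoidHom.mk'_apply]
    rw [hfx, ← hc 0 0 (by simp), zpow_zero, mul_one]
  · intro k
    rw [MonoidHom.mk'_apply]
    rw [hfa, ← hc k _ rfl]
  · intro k
    rw [MonoidHom.mk'_apply]
    rw [hfx, ← hc k _ rfl]

theorem quat_hom_inj (n : ℕ) [NeZero n] {H : Type} [Group H] (a x : H) (h1 : orderOf a = 2 * n)
    (h2 : x * x = a ^ n) (h3 : x * a * x⁻¹ = a⁻¹) (hx : x ∉ Subgroup.zpowers a) :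
    ∃ f : QuaternionGroup n →* H, f (QuaternionGroup.a 1) = a ∧ f (QuaternionGroup.xa 0) = x ∧
      Function.Injective f := by
  obtain ⟨f, hf1, hf2, hf3, hf4⟩ := quat_hom n a x (by rw [← h1, pow_orderOf_eq_one]) h2 h3
  refine ⟨f, hf1, hf2, ?_⟩
  rw [injective_iff_map_eq_one]
  intro q hq
  rcases q with i | i
  · obtain ⟨k, rfl⟩ := ZMod.intCast_surjective i
    rw [hf3, ← orderOf_dvd_iff_zpow_eq_one, h1] at hq
    rw [(ZMod.intCast_zmod_eq_zero_iff_dvd k (2 * n)).2 (by exact_mod_cast hq)]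
    rfl
  · obtain ⟨k, rfl⟩ := ZMod.intCast_surjective i
    rw [hf4] at hq
    exfalso; apply hx
    rw [eq_inv_of_mul_eq_one_left hq]
    exact inv_mem (Subgroup.zpow_mem_zpowers _ _)

theorem big_quat_case {G : Type} [Group G] [Finite G] (Q : Subgroup G) (hQ : Q.Normal)
    (n : ℕ) (a x : G) (hn : 3 ≤ n) (haQ : a ∈ Q) (hxQ : x ∈ Q) (ha : orderOf a = 2 ^ n)
    (hxa : x ∉ Subgroup.zpowers a) (hc : x * a * x⁻¹ = a⁻¹) (hx2 : x * x = a ^ (2 ^ (n - 1)))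
    (hall : ∀ g ∈ Q, g ∈ Subgroup.zpowers a ∨ g * x ∈ Subgroup.zpowers a)
    (d g : G) (hd : d ∈ commutator G) :
    ∃ q ∈ Q, ∀ y ∈ Q, q⁻¹ * (d * g * d⁻¹ * g⁻¹) * y = y * (q⁻¹ * (d * g * d⁻¹ * g⁻¹)) := by
  have hax : ∀ k : ℤ, x * a ^ k * x⁻¹ = a ^ (-k) := by
    intro k; rw [← conj_zpow, hc, inv_zpow, zpow_neg]
  have hx4 : x ^ 4 = 1 := by
    have : x ^ 4 = (x * x) * (x * x) := by simp only [pow_succ, pow_zero, one_mul, mul_assoc]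
    rw [this, hx2, ← pow_add, ← two_mul, ← pow_succ', Nat.sub_add_cancel (by omega), ← ha,
      pow_orderOf_eq_one]
  have hmem : ∀ g, g * a * g⁻¹ ∈ Subgroup.zpowers a := by
    intro g
    rcases hall _ (hQ.conj_mem a haQ g) with h | h
    · exact h
    · exfalso
      obtain ⟨k, hk⟩ := h
      simp only at hk
      set b := g * a * g⁻¹ with hb
      have hbo : orderOf b = 2 ^ n := by
        rw [← ha]; exact (orderOf_injective (MulAut.conj g).toMonoidHom (MulAut.conj g).injective a)
      have e1 : b = a ^ k * x⁻¹ := by rw [hk]; group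
      have e2 : b * b = x⁻¹ * x⁻¹ := by
        have h5 : x⁻¹ * a ^ k * x = a ^ (-k) := by
          have := hax (-k); rw [neg_neg] at this; rw [← this]; group
        calc b * b = a ^ k * (x⁻¹ * a ^ k * x) * x⁻¹ * x⁻¹ := by rw [e1]; group
          _ = _ := by rw [h5]; group
      have e3 : b ^ 4 = 1 := by
        have : b ^ 4 = (b * b) * (b * b) := by simp only [pow_succ, pow_zero, one_mul, mul_assoc]
        rw [this, e2]
        have : x⁻¹ * x⁻¹ * (x⁻¹ * x⁻¹) = (x ^ 4)⁻¹ := by simp only [pow_succ, pow_zero, one_mul, mul_assoc, mul_inv_rev]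
        rw [this, hx4, inv_one]
      have h6 := Nat.le_of_dvd (by norm_num) (orderOf_dvd_of_pow_eq_one e3)
      rw [hbo] at h6
      have := Nat.pow_le_pow_right (show 0 < 2 by norm_num) hn
      omega
  have hN : (Subgroup.zpowers a).Normal := by
    refine ⟨?_⟩
    rintro b ⟨k, rfl⟩ g
    simp only
    rw [← conj_zpow]
    exact Subgroup.zpow_mem _ (hmem g) k
  have hconjx : ∀ g, ∃ i : ℤ, g * x * g⁻¹ = a ^ i * x := by
    intro g
    rcases hall _ (hQ.conj_mem x hxQ g) with h | h
    · exfalso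
      apply hxa
      have := hN.conj_mem _ h g⁻¹
      convert this using 1; group
    · obtain ⟨k, hk⟩ := h
      simp only at hk
      refine ⟨k - 2 ^ (n - 1) , ?_⟩
      have h7 : g * x * g⁻¹ = a ^ k * (x * x)⁻¹ * x := by rw [hk]; group
      rw [h7, hx2, ← zpow_natCast, zpow_sub]; push_cast; rfl
  have hcom : ∀ w ∈ commutator G, w * a = a * w := fun w hw =>
    cyclic_normal_comm (Subgroup.zpowers a) w hw a (Subgroup.mem_zpowers a)
  have hcz : ∀ w ∈ commutator G, ∀ i : ℤ, w * a ^ i = a ^ i * w := fun w hw i =>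
    ((show Commute w a from hcom w hw).zpow_right i)
  obtain ⟨i, hi⟩ := hconjx d
  obtain ⟨m, hm⟩ := hconjx g
  obtain ⟨k, hk⟩ := hmem g
  simp only at hk
  set w := d * g * d⁻¹ * g⁻¹ with hw
  have hwD : w ∈ commutator G := by
    rw [commutator_def]
    exact Subgroup.commutator_mem_commutator (Subgroup.mem_top d) (Subgroup.mem_top g)
  have hkodd : k % 2 = 1 := by
    by_contra hk2
    have : k = 2 * (k / 2) := by omega
    have h8 : orderOf (a ^ k) = 2 ^ n := by
      rw [hk, ← ha]; exact (orderOf_injective (MulAut.conj g).toMonoidHom (MulAut.conj g).injective a)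
    have h9 : (a ^ k) ^ (2 ^ (n-1)) = 1 := by
      rw [this, zpow_mul, ← zpow_natCast, ← zpow_mul, mul_comm, zpow_mul, zpow_natCast, 
        zpow_ofNat, ← pow_mul, mul_comm 2, ← pow_succ, Nat.sub_add_cancel (by omega), ← ha, pow_orderOf_eq_one, one_zpow]
    have := orderOf_dvd_of_pow_eq_one h9
    rw [h8, Nat.pow_dvd_pow_iff_le_right (by norm_num)] at this
    omega
  have key : w * x * w⁻¹ = a ^ (i - k * i) * x := by
    have e1 : d * (a ^ m * x) * d⁻¹ = a ^ i * (a ^ m * x) := by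
      calc d * (a ^ m * x) * d⁻¹ = (d * a ^ m) * (d⁻¹ * (d * x * d⁻¹)) := by group
        _ = a ^ m * (d * x * d⁻¹) := by rw [hcz d hd]; group
        _ = _ := by rw [hi]; group
    have e2 : g * (a ^ i * x) * g⁻¹ = a ^ (k * i) * (a ^ m * x) := by
      calc g * (a ^ i * x) * g⁻¹ = (g * a ^ i * g⁻¹) * (g * x * g⁻¹) := by group
        _ = _ := by rw [hm, ← conj_zpow, ← hk, ← zpow_mul]
    have e3 : w * (a ^ (k * i + m) * x) * w⁻¹ = a ^ i * (a ^ m * x) := by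
      have : a ^ (k * i + m) * x = (g * d) * x * (g * d)⁻¹ := by
        calc a ^ (k * i + m) * x = a ^ (k * i) * (a ^ m * x) := by group
          _ = g * (d * x * d⁻¹) * g⁻¹ := by rw [← e2, hi]
          _ = _ := by group
      rw [this]
      calc w * (g * d * x * (g * d)⁻¹) * w⁻¹ = d * (g * x * g⁻¹) * d⁻¹ := by rw [hw]; group
        _ = _ := by rw [hm, e1]
    calc w * x * w⁻¹ = (w * a ^ (-(k * i + m))) * w⁻¹ * (w * (a ^ (k * i + m) * x) * w⁻¹) := by group
      _ = _ := by rw [hcz w hwD, e3]; group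
  obtain ⟨l, hl⟩ : ∃ l, i - k * i = 2 * l := by
    have : (i - k * i) % 2 = 0 := by
      have : i - k * i = (1 - k) * i := by ring
      rw [this, Int.mul_emod]
      have : (1 - k) % 2 = 0 := by omega
      rw [this]; simp
    exact ⟨(i - k * i) / 2, by omega⟩
  refine ⟨a ^ l, Subgroup.zpow_mem _ haQ _, ?_⟩
  have hua : Commute ((a ^ l)⁻¹ * w) a := by
    apply Commute.mul_left
    · exact ((Commute.refl a).zpow_left l).inv_left
    · exact hcom w hwD
  have hux : Commute ((a ^ l)⁻¹ * w) x := by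
    show (a ^ l)⁻¹ * w * x = x * ((a ^ l)⁻¹ * w)
    have h10 : x * a ^ (-l) = a ^ l * x := by
      have := hax (-l); rw [neg_neg] at this; rw [← this]; group
    calc (a ^ l)⁻¹ * w * x = (a ^ l)⁻¹ * (w * x * w⁻¹) * w := by group
      _ = (a ^ l * x) * w := by rw [key, hl]; group
      _ = _ := by rw [← h10]; group
  intro y hy
  rcases hall y hy with ⟨e, he⟩ | ⟨e, he⟩
  · simp only at he
    rw [← he]; exact hua.zpow_right e
  · simp only at he
    have : y = a ^ e * x⁻¹ := by rw [he]; group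
    rw [this]
    exact (hua.zpow_right e).mul_right hux.inv_right


/-- The axis of an element of the quaternion group of order eight. -/
def qAxis : QuaternionGroup 2 → Fin 3
  | QuaternionGroup.a _ => 0
  | QuaternionGroup.xa i => if i = 0 ∨ i = 2 then 1 else 2

/-- Axis representatives. -/
def qRep : Fin 3 → QuaternionGroup 2 :=
  ![QuaternionGroup.a 1, QuaternionGroup.xa 0, QuaternionGroup.xa 1]

theorem q8_facts : (∀ q : QuaternionGroup 2, q * q ≠ 1 → q * q = QuaternionGroup.a 2) ∧
    (∀ q : QuaternionGroup 2, q * q ≠ 1 → q = qRep (qAxis q) ∨ q = qRep (qAxis q) * QuaternionGroup.a 2) ∧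
    (∀ q : QuaternionGroup 2, qAxis (q * QuaternionGroup.a 2) = qAxis q) ∧
    (∀ m, qRep m * qRep m ≠ 1) ∧ (∀ m, qAxis (qRep m) = m) := by
  refine ⟨by decide, by decide, by decide, by decide, by decide⟩

theorem aut_sq (φ : MulAut (QuaternionGroup 2)) (q : QuaternionGroup 2) (h : q * q ≠ 1) :
    φ q * φ q ≠ 1 := by
  rw [← map_mul]
  intro h1
  exact h ((map_eq_one_iff φ φ.injective).1 h1)

theorem aut_axis (φ : MulAut (QuaternionGroup 2)) (q : QuaternionGroup 2) (h : q * q ≠ 1) :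
    qAxis (φ q) = qAxis (φ (qRep (qAxis q))) := by
  obtain ⟨f1, f2, f3, f4, f5⟩ := q8_facts
  have hz : φ (QuaternionGroup.a 2) = QuaternionGroup.a 2 := by
    rw [← f1 (qRep 0) (f4 0), map_mul]
    rw [f1 _ (aut_sq φ _ (f4 0)), f1 _ (f4 0)]
  rcases f2 q h with e | e
  · rw [← e]
  · conv_lhs => rw [e]
    rw [map_mul, hz, f3]

theorem axis_hom : ∃ π : MulAut (QuaternionGroup 2) →* Equiv.Perm (Fin 3),
    ∀ φ m, π φ m = qAxis (φ (qRep m)) := by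
  obtain ⟨f1, f2, f3, f4, f5⟩ := q8_facts
  let π0 : MulAut (QuaternionGroup 2) →* Function.End (Fin 3) :=
    { toFun := fun φ m => qAxis (φ (qRep m))
      map_one' := by
        funext m
        exact f5 m
      map_mul' := by
        intro φ ψ
        funext m
        exact aut_axis φ (ψ (qRep m)) (aut_sq ψ _ (f4 m)) }
  exact ⟨MonoidHom.toHomPerm π0, fun φ m => rfl⟩

theorem perm3_facts :
    (∀ σ τ ν : Equiv.Perm (Fin 3), σ * τ ≠ τ * σ → ν = 1 ∨ ν = σ ∨ ν = τ ∨ ν = σ * τ ∨ ν = τ * σ ∨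
      ν = σ * σ ∨ ν = τ * τ ∨ ν = σ * τ * σ) ∧
    (∀ a b : Equiv.Perm (Fin 3), Equiv.Perm.sign a = 1 → Equiv.Perm.sign b = 1 → a * b = b * a) := by
  constructor
  · decide
  · decide

theorem q8_adjust1 : ∀ u v : QuaternionGroup 2, u * u ≠ 1 ∧ v * v ≠ 1 ∧
    qAxis u = 0 ∧ qAxis v = 1 → ∃ q : QuaternionGroup 2,
      q * QuaternionGroup.a 1 * q⁻¹ = u ∧ q * QuaternionGroup.xa 0 * q⁻¹ = v := by
  decide

theorem q8_adjust2 : ∀ u v : QuaternionGroup 2, u * u ≠ 1 ∧ v * v ≠ 1 ∧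
    qAxis u = 1 ∧ qAxis v = 2 → ∃ q : QuaternionGroup 2,
      q * u * q⁻¹ = QuaternionGroup.xa 0 ∧
      q * v * q⁻¹ = QuaternionGroup.a 1 * QuaternionGroup.xa 0 := by
  decide

theorem q8_adjust3 : ∀ u v : QuaternionGroup 2, u * u ≠ 1 ∧ v * v ≠ 1 ∧
    qAxis u = 1 ∧ qAxis v = 0 → ∃ q : QuaternionGroup 2,
      q * u * q⁻¹ = (QuaternionGroup.xa 0)⁻¹ ∧ q * v * q⁻¹ = (QuaternionGroup.a 1)⁻¹ := by
  decide

theorem q8_form : ∀ q : QuaternionGroup 2, ∃ a < 4, ∃ b < 2,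
    q = QuaternionGroup.a 1 ^ a * QuaternionGroup.xa 0 ^ b := by
  decide


/-- Data extracted from the exceptional configuration. -/
def BadData {G : Type} [Group G] (i j g t : G) : Prop :=
  i * i ≠ 1 ∧ i ^ 4 = 1 ∧ j * j = i * i ∧ j * i = i ^ 3 * j ∧ g * i = j * g ∧ g * j = i * j * g ∧
    t * i = j ^ 3 * t ∧ t * j = i ^ 3 * t ∧
    (∀ y, y * i * y⁻¹ ∈ Subgroup.closure {i, j} ∧ y * j * y⁻¹ ∈ Subgroup.closure {i, j}) ∧
    (∀ q ∈ Subgroup.closure {i, j}, q ^ 4 = 1) ∧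
    ∀ y : G, ∃ e < 3, ∃ f < 2, ∃ a < 4, ∃ b < 2,
      Commute ((g ^ e * t ^ f * (i ^ a * j ^ b))⁻¹ * y) i ∧
      Commute ((g ^ e * t ^ f * (i ^ a * j ^ b))⁻¹ * y) j

theorem perm3_words (c s : Equiv.Perm (Fin 3)) (hc0 : c 0 = 1) (hc1 : c 1 = 2) (hs0 : s 0 = 1)
    (hs1 : s 1 = 0) (ν : Equiv.Perm (Fin 3)) : ∃ e < 3, ∃ f < 2, ν = c ^ e * s ^ f := by
  have h1 : ∀ c : Equiv.Perm (Fin 3), c 0 = 1 ∧ c 1 = 2 → c = finRotate 3 := by decide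
  have h2 : ∀ c : Equiv.Perm (Fin 3), c 0 = 1 ∧ c 1 = 0 → c = Equiv.swap 0 1 := by decide
  rw [h1 c ⟨hc0, hc1⟩, h2 s ⟨hs0, hs1⟩]
  revert ν
  decide

theorem q8_case {G : Type} [Group G] (ι : QuaternionGroup 2 →* G) (hι : Function.Injective ι)
    (hn : ι.range.Normal) :
    (∀ y ∈ ⁅commutator G, commutator G⁆, ∃ q, ∀ p, Commute ((ι q)⁻¹ * y) (ι p)) ∧
    ((∀ y ∈ commutator G, ∃ q, ∀ p, Commute ((ι q)⁻¹ * y) (ι p)) ∨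
      ∃ i j g t : G, BadData i j g t) := by
  let e : QuaternionGroup 2 ≃* ι.range := MonoidHom.ofInjective hι
  let α : G →* MulAut (QuaternionGroup 2) :=
    (MulAut.congr e.symm).toMonoidHom.comp (MulAut.conjNormal (H := ι.range))
  have hα : ∀ y q, ι (α y q) = y * ι q * y⁻¹ := by
    intro y q
    have h1 : ∀ r : ι.range, ι (e.symm r) = r := by
      intro r
      exact congrArg Subtype.val (e.apply_symm_apply r)
    exact h1 (MulAut.conjNormal y (e q))
  obtain ⟨π, hπ⟩ := axis_hom
  obtain ⟨f1, f2, f3, f4, f5⟩ := q8_facts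
  have hconj : ∀ q, α (ι q) = MulAut.conj q := by
    intro q
    ext p
    apply hι
    rw [hα]; simp
  have hker : ∀ φ, π φ = 1 → ∃ q, φ = MulAut.conj q := by
    intro φ h
    have h0 := hπ φ 0
    have h1 := hπ φ 1
    rw [h] at h0 h1
    obtain ⟨q, hq1, hq2⟩ := q8_adjust1 _ _ ⟨aut_sq φ _ (f4 0), aut_sq φ _ (f4 1), h0.symm, h1.symm⟩
    refine ⟨q, ?_⟩
    ext p
    obtain ⟨a, -, b, -, rfl⟩ := q8_form p
    have e1 : φ (QuaternionGroup.a 1) = MulAut.conj q (QuaternionGroup.a 1) := hq1.symm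
    have e2 : φ (QuaternionGroup.xa 0) = MulAut.conj q (QuaternionGroup.xa 0) := hq2.symm
    rw [map_mul, map_mul, map_pow, map_pow, map_pow, map_pow, e1, e2]
  have hcomm : ∀ y q, α y = MulAut.conj q → ∀ p, Commute ((ι q)⁻¹ * y) (ι p) := by
    intro y q h p
    have := hα y p
    rw [h] at this
    simp only [MulAut.conj_apply, map_mul, map_inv] at this
    show (ι q)⁻¹ * y * ι p = ι p * ((ι q)⁻¹ * y)
    calc (ι q)⁻¹ * y * ι p = (ι q)⁻¹ * (y * ι p * y⁻¹) * y := by group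
      _ = _ := by rw [← this]; group
  have hker2 : ∀ y, π (α y) = 1 → ∃ q, ∀ p, Commute ((ι q)⁻¹ * y) (ι p) := by
    intro y hy
    obtain ⟨q, hq⟩ := hker _ hy
    exact ⟨q, hcomm y q hq⟩
  let ψ : G →* Equiv.Perm (Fin 3) := π.comp α
  have hψ : ∀ y, π (α y) = ψ y := fun y => rfl
  constructor
  · intro y hy
    apply hker2
    rw [hψ, ← MonoidHom.mem_ker]
    revert y
    show ⁅commutator G, commutator G⁆ ≤ ψ.ker
    rw [Subgroup.commutator_le]
    have hs : ∀ d ∈ commutator G, Equiv.Perm.sign (ψ d) = 1 := by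
      intro d hd
      have : commutator G ≤ (Equiv.Perm.sign.comp ψ).ker := Abelianization.commutator_subset_ker _
      exact this hd
    intro a ha b hb
    rw [MonoidHom.mem_ker]
    change ψ (a * b * a⁻¹ * b⁻¹) = 1
    rw [map_mul, map_mul, map_mul, perm3_facts.2 _ _ (hs a ha) (hs b hb)]
    simp
  · by_cases hab : ∀ a b, ψ a * ψ b = ψ b * ψ a
    · left
      intro y hy
      apply hker2
      rw [hψ, ← MonoidHom.mem_ker]
      revert y
      show commutator G ≤ ψ.ker
      rw [commutator_def, Subgroup.commutator_le]
      intro a _ b _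
      rw [MonoidHom.mem_ker]
      change ψ (a * b * a⁻¹ * b⁻¹) = 1
      rw [map_mul, map_mul, map_mul, hab]
      simp
    · right
      push Not at hab
      obtain ⟨u, v, huv⟩ := hab
      have hsurj : ∀ ν, ∃ y, ψ y = ν := by
        intro ν
        rcases perm3_facts.1 _ _ ν huv with h | h | h | h | h | h | h | h
        · exact ⟨1, by rw [h, map_one]⟩
        · exact ⟨u, h.symm⟩
        · exact ⟨v, h.symm⟩
        · exact ⟨u * v, by rw [h, map_mul]⟩
        · exact ⟨v * u, by rw [h, map_mul]⟩
        · exact ⟨u * u, by rw [h, map_mul]⟩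
        · exact ⟨v * v, by rw [h, map_mul]⟩
        · exact ⟨u * v * u, by rw [h, map_mul, map_mul]⟩
      obtain ⟨g1, hg1⟩ := hsurj (finRotate 3)
      obtain ⟨t1, ht1⟩ := hsurj (Equiv.swap 0 1)
      have hg10 : qAxis (α g1 (qRep 0)) = 1 := by rw [← hπ, hψ, hg1]; decide
      have hg11 : qAxis (α g1 (qRep 1)) = 2 := by rw [← hπ, hψ, hg1]; decide
      have ht10 : qAxis (α t1 (qRep 0)) = 1 := by rw [← hπ, hψ, ht1]; decide
      have ht11 : qAxis (α t1 (qRep 1)) = 0 := by rw [← hπ, hψ, ht1]; decide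
      obtain ⟨p, hp1, hp2⟩ := q8_adjust2 _ _ ⟨aut_sq _ _ (f4 0), aut_sq _ _ (f4 1), hg10, hg11⟩
      obtain ⟨r, hr1, hr2⟩ := q8_adjust3 _ _ ⟨aut_sq _ _ (f4 0), aut_sq _ _ (f4 1), ht10, ht11⟩
      have mg : ∀ q, α (ι p * g1) q = p * α g1 q * p⁻¹ := by
        intro q; rw [map_mul, hconj]; rfl
      have mt : ∀ q, α (ι r * t1) q = r * α t1 q * r⁻¹ := by
        intro q; rw [map_mul, hconj]; rfl
      rw [← mg] at hp1 hp2
      rw [← mt] at hr1 hr2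
      set g := ι p * g1
      set t := ι r * t1
      set I := QuaternionGroup.a (n := 2) 1 with hI
      set J := QuaternionGroup.xa (n := 2) 0 with hJ
      have e1 : qRep 0 = I := rfl
      have e2 : qRep 1 = J := rfl
      rw [e1] at hp1 hr1
      rw [e2] at hp2 hr2
      have conv : ∀ y q q', α y q = q' → y * ι q = ι q' * y := by
        intro y q q' h
        rw [← h, hα]; group
      have hcl : ∀ q, ι q ∈ Subgroup.closure {ι I, ι J} := by
        intro q
        obtain ⟨a, -, b, -, rfl⟩ := q8_form q
        rw [map_mul, map_pow, map_pow]
        exact mul_mem (pow_mem (Subgroup.subset_closure (by simp [hI])) _)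
          (pow_mem (Subgroup.subset_closure (by simp [hJ])) _)
      have hcl2 : Subgroup.closure {ι I, ι J} ≤ ι.range := by
        rw [Subgroup.closure_le]
        rintro x (rfl | rfl)
        · exact ⟨_, rfl⟩
        · exact ⟨_, rfl⟩
      refine ⟨ι I, ι J, g, t, ?_, ?_, ?_, ?_, ?_, ?_, ?_, ?_, ?_, ?_, ?_⟩
      · rw [← map_mul, Ne, map_eq_one_iff ι hι]; decide
      · rw [← map_pow, map_eq_one_iff ι hι]; decide
      · rw [← map_mul, ← map_mul]; congr 1
      · rw [← map_mul, ← map_pow, ← map_mul]; congr 1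
      · exact conv _ _ _ hp1
      · rw [← map_mul]; exact conv _ _ _ hp2
      · rw [← map_pow]
        apply conv; rw [hr1]; decide
      · rw [← map_pow]
        apply conv; rw [hr2]; decide
      · intro y
        rw [← hα, ← hα]
        exact ⟨hcl _, hcl _⟩
      · intro q hq
        obtain ⟨q', rfl⟩ := hcl2 hq
        have : ∀ q : QuaternionGroup 2, q ^ 4 = 1 := by decide
        rw [← map_pow, this, map_one]
      · intro y
        have k1 : ψ g 0 = 1 := by rw [← hψ, hπ, e1, hp1]; decide
        have k2 : ψ g 1 = 2 := by rw [← hψ, hπ, e2, hp2]; decide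
        have k3 : ψ t 0 = 1 := by rw [← hψ, hπ, e1, hr1]; decide
        have k4 : ψ t 1 = 0 := by rw [← hψ, hπ, e2, hr2]; decide
        obtain ⟨e, he, f, hf, hef⟩ := perm3_words _ _ k1 k2 k3 k4 (ψ y)
        obtain ⟨q, hq⟩ := hker2 ((g ^ e * t ^ f)⁻¹ * y) (by
          rw [hψ, map_mul, map_inv, map_mul, map_pow, map_pow, hef]; simp)
        obtain ⟨a, ha, b, hb, hqab⟩ := q8_form q
        refine ⟨e, he, f, hf, a, ha, b, hb, ?_, ?_⟩
        · have := hq I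
          rw [hqab, map_mul, map_pow, map_pow] at this
          rw [mul_inv_rev (g ^ e * t ^ f), mul_assoc]; exact this
        · have := hq J
          rw [hqab, map_mul, map_pow, map_pow] at this
          rw [mul_inv_rev (g ^ e * t ^ f), mul_assoc]; exact this


theorem main_case {G : Type} [Group G] [Finite G] (hsol : IsSolvable G)
    (hprime : ∀ p : ℕ, p.Prime → ∀ x y : G, x * y = y * x → x ^ p = 1 → y ^ p = 1 → x ≠ 1 →
      y ∈ Subgroup.zpowers x)
    (hinv : ∀ x y : G, x ≠ 1 → y ≠ 1 → x * x = 1 → y * y = 1 → x = y) :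
    fittingHeight G ≤ 2 ∨ (fittingHeight G ≤ 3 ∧ ∃ i j g t : G, BadData i j g t) := by
  obtain ⟨F, hFn, hFnil, hFc⟩ := fitting_exists G hsol
  obtain ⟨P, hP1, hP2, hP3⟩ := fitting_parts F hFn hFnil
  have hodd : ∀ p, p.Prime → p ≠ 2 → ∀ d ∈ commutator G, ∀ x ∈ P p, d * x = x * d := by
    intro p hp hp2 d hd x hx
    have := Fact.mk hp
    obtain ⟨h1, h2, h3⟩ := hP1 p hp
    have hcy : IsCyclic (P p) := by
      refine cyc_aux p _ (P p) rfl h2 ?_ (Or.inl hp2)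
      intro x y hxy hx hy hx1
      obtain ⟨k, hk⟩ := hprime p hp (x : G) y (congrArg Subtype.val hxy)
        (by simpa using congrArg Subtype.val hx) (by simpa using congrArg Subtype.val hy)
        (by simpa using hx1)
      exact ⟨k, Subtype.ext (by simpa using hk)⟩
    exact cyclic_normal_comm (P p) d hd x hx
  obtain ⟨hQn, hQ2, hQF⟩ := hP1 2 Nat.prime_two
  have key : ∀ w ∈ commutator G, ∀ q ∈ P 2,
      (∀ y ∈ P 2, q⁻¹ * w * y = y * (q⁻¹ * w)) → w ∈ F := by
    intro w hw q hq hy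
    have : q⁻¹ * w ∈ F := by
      apply hFc
      apply hP3
      intro p hp x hx
      by_cases hp2 : p = 2
      · subst hp2; exact hy x hx
      · have c1 : Commute q x := hP2 2 p Nat.prime_two hp (Ne.symm hp2) q hq x hx
        have c2 : Commute w x := hodd p hp hp2 w hw x hx
        exact c1.inv_left.mul_left c2
    have h2 := F.mul_mem (hQF hq) this
    rwa [mul_inv_cancel_left] at h2
  have hDG : commutator G ≤ F → fittingHeight G ≤ 2 := by
    intro h
    exact height_le_two F hFn hFnil ((Subgroup.commutator_le_left _ _).trans h)
  rcases quat_struct (P 2) hQ2 (by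
    intro x y hx hy hx2 hy2
    exact Subtype.ext (hinv x y (by simpa using hx) (by simpa using hy)
      (by simpa using congrArg Subtype.val hx2) (by simpa using congrArg Subtype.val hy2)))
    with hcy | ⟨n, a, x, hn, ha, hxa, hc, hx2, hall⟩
  · left
    apply hDG
    intro d hd
    refine key d hd 1 (one_mem _) ?_
    intro y hy
    rw [inv_one, one_mul]
    exact cyclic_normal_comm (P 2) d hd y hy
  · have ha' : orderOf (a : G) = 2 ^ n := by rw [← ha]; simp
    have hxa' : (x : G) ∉ Subgroup.zpowers (a : G) := by
      rintro ⟨k, hk⟩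
      exact hxa ⟨k, Subtype.ext (by simpa using hk)⟩
    have hc' : (x : G) * a * (x : G)⁻¹ = (a : G)⁻¹ := by simpa using congrArg Subtype.val hc
    have hx2' : (x : G) * x = (a : G) ^ (2 ^ (n - 1)) := by simpa using congrArg Subtype.val hx2
    have hall' : ∀ g ∈ P 2, g ∈ Subgroup.zpowers (a : G) ∨ g * (x : G) ∈ Subgroup.zpowers (a : G) := by
      intro g hg
      rcases hall ⟨g, hg⟩ with ⟨k, hk⟩ | ⟨k, hk⟩
      · left; exact ⟨k, by simpa using congrArg Subtype.val hk⟩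
      · right; exact ⟨k, by simpa using congrArg Subtype.val hk⟩
    rcases Nat.lt_or_ge n 3 with hn3 | hn3
    · obtain rfl : n = 2 := by omega
      obtain ⟨ι, hιa, hιx, hι⟩ := quat_hom_inj 2 (a : G) (x : G) ha' hx2' hc' hxa'
      have hr : ι.range = P 2 := by
        apply le_antisymm
        · rintro _ ⟨q, rfl⟩
          obtain ⟨k, -, l, -, rfl⟩ := q8_form q
          rw [map_mul, map_pow, map_pow, hιa, hιx]
          exact mul_mem (pow_mem a.2 _) (pow_mem x.2 _)
        · intro g hg
          have h1 : (a : G) ∈ ι.range := ⟨_, hιa⟩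
          have h2 : (x : G) ∈ ι.range := ⟨_, hιx⟩
          rcases hall' g hg with ⟨k, hk⟩ | ⟨k, hk⟩
          · rw [← hk]; exact zpow_mem h1 k
          · simp only at hk
            have : g = (a : G) ^ k * (x : G)⁻¹ := by rw [hk]; group
            rw [this]; exact mul_mem (zpow_mem h1 k) (inv_mem h2)
      have key2 : ∀ w ∈ commutator G, (∃ q, ∀ p, Commute ((ι q)⁻¹ * w) (ι p)) → w ∈ F := by
        rintro w hw ⟨q, hq⟩
        refine key w hw (ι q) (hr ▸ ⟨q, rfl⟩) ?_
        intro y hy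
        rw [← hr] at hy
        obtain ⟨p, rfl⟩ := hy
        exact hq p
      obtain ⟨h1, h2⟩ := q8_case ι hι (hr ▸ hQn)
      rcases h2 with h2 | h2
      · left
        apply hDG
        intro d hd
        exact key2 d hd (h2 d hd)
      · right
        refine ⟨height_le_three F hFn hFnil ?_, h2⟩
        intro d hd
        exact key2 d (Subgroup.commutator_le_left _ _ hd) (h1 d hd)
    · left
      apply height_le_two F hFn hFnil
      rw [Subgroup.commutator_le]
      intro d hd g _
      obtain ⟨q, hq, hqy⟩ := big_quat_case (P 2) hQn n a x hn3 a.2 x.2 ha' hxa' hc' hx2' hall' d g hd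
      refine key _ ?_ q hq hqy
      rw [commutator_def]
      exact Subgroup.commutator_mem_commutator (Subgroup.mem_top d) (Subgroup.mem_top g)


theorem odd_complement {C : Type} [Group C] [Finite C] (z : C) (hz2 : z * z = 1) (hz1 : z ≠ 1)
    (hz : ∀ y, y * z = z * y) (h2 : ∀ c : C, ∀ k : ℕ, c ^ (2 ^ k) = 1 → c = 1 ∨ c = z) :
    ∃ N : Subgroup C, ¬ 2 ∣ Nat.card N ∧ ∀ c, c ∈ N ∨ c * z ∈ N := by
  have := Fact.mk Nat.prime_two
  let P : Sylow 2 C := default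
  have hPz : ∀ p ∈ (P : Subgroup C), p = 1 ∨ p = z := by
    intro p hp
    obtain ⟨k, hk⟩ := P.isPGroup' ⟨p, hp⟩
    exact h2 p k (by simpa using congrArg Subtype.val hk)
  have hP : Subgroup.normalizer ((P : Subgroup C) : Set C) ≤ Subgroup.centralizer ((P : Subgroup C) : Set C) := by
    intro x _
    rw [Subgroup.mem_centralizer_iff]
    intro p hp
    rcases hPz p hp with rfl | rfl
    · simp
    · exact (hz x).symm
  refine ⟨(MonoidHom.transferSylow P hP).ker, MonoidHom.not_dvd_card_ker_transferSylow P hP, ?_⟩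
  intro c
  have hcomp := MonoidHom.ker_transferSylow_isComplement' P hP
  obtain ⟨⟨⟨n, hn⟩, ⟨p, hp⟩⟩, hnp⟩ := hcomp.2 c
  simp only at hnp
  rcases hPz p hp with rfl | rfl
  · left; rw [← hnp, mul_one]; exact hn
  · right; rw [← hnp, mul_assoc, hz2, mul_one]; exact hn

/-- Defining relations of the binary octahedral group. -/
def OctRel {H : Type} [Group H] (i j c s : H) : Prop :=
  i ^ 4 = 1 ∧ j * j = i * i ∧ j * i = i ^ 3 * j ∧ c ^ 3 = 1 ∧ c * i = j * c ∧ c * j = i * j * c ∧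
    s * s = i * i ∧ s * i = j ^ 3 * s ∧ s * j = i ^ 3 * s ∧ s * c = c ^ 2 * s

theorem q8_eval {H : Type} [Group H] (i j : H) (h1 : i ^ 4 = 1) (h2 : j * j = i * i)
    (h3 : j * i = i ^ 3 * j) : ∃ f : QuaternionGroup 2 →* H,
      f (QuaternionGroup.a 1) = i ∧ f (QuaternionGroup.xa 0) = j := by
  obtain ⟨f, hf1, hf2, -⟩ := quat_hom 2 i j h1 (by rw [h2, pow_two]) (by
    rw [h3, mul_inv_cancel_right]
    exact eq_inv_of_mul_eq_one_left (by rw [← pow_succ, h1]))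
  exact ⟨f, hf1, hf2⟩

theorem bad_quot {G : Type} [Group G] [Finite G]
    (hinv : ∀ x y : G, x ≠ 1 → y ≠ 1 → x * x = 1 → y * y = 1 → x = y)
    (i j g t : G) (hbad : BadData i j g t) :
    ∃ (N : Subgroup G) (_ : N.Normal) (i j c s : G ⧸ N), OctRel i j c s ∧
      Subgroup.closure {i, j, c, s} = ⊤ ∧ i * i ≠ 1 ∧
      ∀ y : G ⧸ N, Commute y i → Commute y j → y = 1 ∨ y = i * i := by
  obtain ⟨hi1, hi4, hj2, hji, hgi, hgj, hti, htj, hcl, hq4, hform⟩ := hbad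
  obtain ⟨f, hfi, hfj⟩ := q8_eval i j hi4 hj2 hji
  set z := i * i with hzdef
  have hz2 : z * z = 1 := by rw [hzdef, ← hi4]; simp only [pow_succ, pow_zero, one_mul, mul_assoc]
  have hzc : ∀ y, y * z = z * y := by
    intro y
    have : y * z * y⁻¹ = z := by
      apply hinv
      · intro h; apply hi1; rw [mul_inv_eq_one] at h; simpa using h
      · exact hi1
      · calc y * z * y⁻¹ * (y * z * y⁻¹) = y * (z * z) * y⁻¹ := by group
          _ = 1 := by rw [hz2]; group
      · exact hz2
    calc y * z = (y * z * y⁻¹) * y := by group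
      _ = _ := by rw [this]
  have hij : i * j ≠ j * i := by
    intro h
    rw [hji] at h
    apply hi1
    have h5 : i = i ^ 3 := mul_right_cancel h
    have : i * (i * i) = i * 1 := by
      rw [mul_one]
      nth_rewrite 4 [h5]
      simp only [pow_succ, pow_zero, one_mul, mul_assoc]
    exact mul_left_cancel this
  have hQn : (Subgroup.closure {i, j}).Normal := by
    refine ⟨fun q hq y => ?_⟩
    have : Subgroup.closure {i, j} ≤ (Subgroup.closure {i, j}).comap (MulAut.conj y).toMonoidHom := by
      rw [Subgroup.closure_le]
      rintro x (rfl | rfl)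
      · exact (hcl y).1
      · exact (hcl y).2
    exact this hq
  set C : Subgroup G := Subgroup.centralizer (Subgroup.closure {i, j} : Set G) with hC
  have hCn : C.Normal := inferInstance
  have hCmem : ∀ y, Commute y i → Commute y j → y ∈ C := by
    intro y h1 h2
    rw [hC, Subgroup.centralizer_closure, Subgroup.mem_centralizer_iff]
    rintro x (rfl | rfl)
    · exact h1.symm
    · exact h2.symm
  have hCi : ∀ y ∈ C, Commute y i ∧ Commute y j := by
    intro y hy
    rw [hC, Subgroup.centralizer_closure, Subgroup.mem_centralizer_iff] at hy
    exact ⟨(hy i (by simp)).symm, (hy j (by simp)).symm⟩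
  have hzC : z ∈ C := hCmem z (hzc i).symm (hzc j).symm
  have hCsq : ∀ y ∈ C, y * y ≠ z := by
    intro y hy hyz
    obtain ⟨h1, h2⟩ := hCi y hy
    have h3 : (y * i) * (y * i) = 1 := by
      calc (y * i) * (y * i) = y * (i * y) * i := by group
        _ = (y * y) * (i * i) := by rw [← h1.eq]; group
        _ = 1 := by rw [hyz, ← hzdef, hz2]
    have h4 : Commute (y * i) j := by
      by_cases h5 : y * i = 1
      · rw [h5]; exact Commute.one_left j
      · rw [hinv _ _ h5 hi1 h3 hz2]; exact (hzc j).symm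
    have h6 : Commute i j := by
      have := (h2.inv_left).mul_left h4
      rwa [inv_mul_cancel_left] at this
    exact hij h6.eq
  have hC2 : ∀ k : ℕ, ∀ y ∈ C, y ^ (2 ^ k) = 1 → y = 1 ∨ y = z := by
    intro k
    induction k with
    | zero => intro y _ h; left; simpa using h
    | succ k ih =>
      intro y hy h
      rw [pow_succ', pow_mul, pow_two] at h
      rcases ih (y * y) (mul_mem hy hy) h with h1 | h1
      · by_cases hy1 : y = 1
        · exact Or.inl hy1
        · exact Or.inr (hinv _ _ hy1 hi1 h1 hz2)
      · exact absurd h1 (hCsq y hy)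
  obtain ⟨N', hN'2, hN'⟩ := odd_complement (⟨z, hzC⟩ : C) (Subtype.ext hz2)
    (fun h => hi1 (by simpa using congrArg Subtype.val h)) (fun y => Subtype.ext (hzc y))
    (fun c k h => by
      rcases hC2 k c c.2 (by simpa using congrArg Subtype.val h) with h | h
      · left; exact Subtype.ext h
      · right; exact Subtype.ext h)
  let N : Subgroup G := N'.map C.subtype
  obtain ⟨m, hm2, hm⟩ : ∃ m, m % 2 = 1 ∧ ∀ y ∈ N, y ^ m = 1 := by
    refine ⟨Nat.card N', by omega, ?_⟩
    rintro _ ⟨y, hy, rfl⟩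
    have : (⟨y, hy⟩ : N') ^ Nat.card N' = 1 := pow_card_eq_one'
    exact congrArg (fun x : N' => (((x : C)) : G)) this
  have hNC : N ≤ C := Subgroup.map_subtype_le _
  have hCN : ∀ y ∈ C, y ∈ N ∨ y * z ∈ N := by
    intro y hy
    rcases hN' ⟨y, hy⟩ with h | h
    · left; exact ⟨_, h, rfl⟩
    · right; exact ⟨_, h, rfl⟩
  have hzm : z ^ m = z := by
    obtain ⟨l, hl⟩ : ∃ l, m = 2 * l + 1 := ⟨m / 2, by omega⟩
    rw [hl, pow_succ, pow_mul, pow_two, hz2, one_pow, one_mul]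
  have hNn : N.Normal := by
    refine ⟨fun n hn y => ?_⟩
    rcases hCN (y * n * y⁻¹) (hCn.conj_mem n (hNC hn) y) with h | h
    · exact h
    · exfalso
      have h1 := hm _ h
      rw [(show Commute (y * n * y⁻¹) z from hzc _).mul_pow, hzm, conj_pow, hm n hn] at h1
      apply hi1; simpa using h1
  have hzN : z ∉ N := fun h => hi1 (by rw [← hzm]; exact hm z h)
  -- odd power of t
  have hword : ∀ u v : QuaternionGroup 2, u = v → f u = f v := fun u v h => by rw [h]
  have ht1 : SemiconjBy t i (j ^ 3) := hti
  have ht2 : SemiconjBy t j (i ^ 3) := htj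
  have hw1 : (i ^ 3) ^ 3 = i := by
    rw [← hfi]; simp only [← map_pow]; exact hword _ _ (by decide)
  have hw2 : (j ^ 3) ^ 3 = j := by
    rw [← hfj]; simp only [← map_pow]; exact hword _ _ (by decide)
  have hw3 : j * (i * j) = i := by
    rw [← hfi, ← hfj]; simp only [← map_mul]; exact hword _ _ (by decide)
  have hw4 : i * (j * (i * j)) = j * j := by
    rw [← hfi, ← hfj]; simp only [← map_mul]; exact hword _ _ (by decide)
  have hw5 : i * j * i = j := by
    rw [← hfi, ← hfj]; simp only [← map_mul]; exact hword _ _ (by decide)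
  have hw6 : ((i * j) ^ 3 * j ^ 3) ^ 3 = i := by
    rw [← hfi, ← hfj]; simp only [← map_mul, ← map_pow]; exact hword _ _ (by decide)
  have htt : t * t ∈ C := by
    apply hCmem
    · have := (ht2.pow_right 3).mul_left ht1
      rwa [hw1] at this
    · have := (ht1.pow_right 3).mul_left ht2
      rwa [hw2] at this
  obtain ⟨k, r, hr, hkr⟩ := Nat.exists_eq_pow_mul_and_not_dvd (orderOf_pos t).ne' 2 (by norm_num)
  obtain ⟨l, hl⟩ : ∃ l, r = 2 * l + 1 := ⟨r / 2, by omega⟩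
  set s := t ^ r with hs
  have hst : s = (t * t) ^ l * t := by rw [hs, hl, pow_succ, pow_mul, pow_two]
  have httl : (t * t) ^ l ∈ C := pow_mem htt l
  have hs1 : SemiconjBy s i (j ^ 3) := by
    rw [hst]; exact SemiconjBy.mul_left ((hCi _ httl).2.pow_right 3) ht1
  have hs2 : SemiconjBy s j (i ^ 3) := by
    rw [hst]; exact SemiconjBy.mul_left ((hCi _ httl).1.pow_right 3) ht2
  have hss : s * s ∈ C := by
    apply hCmem
    · have := (hs2.pow_right 3).mul_left hs1
      rwa [hw1] at this
    · have := (hs1.pow_right 3).mul_left hs2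
      rwa [hw2] at this
  have hs2k : s ^ (2 ^ k) = 1 := by
    rw [hs, ← pow_mul, mul_comm, ← hkr, pow_orderOf_eq_one]
  have hsz : s * s = z := by
    rcases hC2 k (s * s) hss (by rw [← pow_two, ← pow_mul, mul_comm, pow_mul, hs2k, one_pow]) with h | h
    · exfalso
      have hsc : Commute s i := by
        by_cases h1 : s = 1
        · rw [h1]; exact Commute.one_left i
        · rw [hinv _ _ h1 hi1 h hz2]; exact (hzc i).symm
      have h3 : i = j ^ 3 := by
        have := hsc.eq.symm.trans hs1.eq
        exact mul_right_cancel this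
      apply hij
      rw [h3, ← pow_succ, ← pow_succ']
    · exact h
  have hg1 : SemiconjBy g i j := hgi
  have hg2 : SemiconjBy g j (i * j) := hgj
  have hg3 : SemiconjBy g (i * j) i := by
    have := hg1.mul_right hg2
    rwa [hw3] at this
  have hggg : g ^ 3 ∈ C := by
    have e : g ^ 3 = g * (g * g) := by simp only [pow_succ, pow_zero, one_mul, mul_assoc]
    rw [e]
    apply hCmem
    · exact hg3.mul_left (hg2.mul_left hg1)
    · exact hg1.mul_left (hg3.mul_left hg2)
  obtain ⟨c, hcg, hc3⟩ : ∃ c, (c = g ∨ c = g * z) ∧ c ^ 3 ∈ N := by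
    rcases hCN _ hggg with h | h
    · exact ⟨g, Or.inl rfl, h⟩
    · refine ⟨g * z, Or.inr rfl, ?_⟩
      rw [(show Commute g z from hzc g).mul_pow]
      have : z ^ 3 = z := by rw [pow_succ, pow_two, hz2, one_mul]
      rwa [this]
  have hc1 : SemiconjBy c i j := by
    rcases hcg with h | h
    · rw [h]; exact hg1
    · rw [h]; exact hg1.mul_left (show Commute z i from (hzc i).symm)
  have hc2 : SemiconjBy c j (i * j) := by
    rcases hcg with h | h
    · rw [h]; exact hg2
    · rw [h]; exact hg2.mul_left (show Commute z j from (hzc j).symm)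
  have hu : c * (s * (c * s⁻¹)) ∈ C := by
    have a1 : SemiconjBy s⁻¹ i (j ^ 3) := by
      have := (hs2.pow_right 3).inv_symm_left
      rwa [hw1] at this
    have a2 : SemiconjBy s⁻¹ j (i ^ 3) := by
      have := (hs1.pow_right 3).inv_symm_left
      rwa [hw2] at this
    apply hCmem
    · have b1 := (hc2.pow_right 3).mul_left a1
      have b2 := ((hs1.mul_right hs2).pow_right 3).mul_left b1
      have b3 := ((((hc2.pow_right 3).mul_right (hc1.pow_right 3))).pow_right 3).mul_left b2
      rwa [hw6] at b3
    · have b1 := (hc1.pow_right 3).mul_left a2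
      have b2 := (hs2.pow_right 3).mul_left b1
      rw [hw1] at b2
      exact hc1.mul_left b2
  obtain ⟨φ, hφs, hk1, hk2⟩ : ∃ φ : G →* G ⧸ N, Function.Surjective φ ∧ (∀ n, n ∈ N → φ n = 1) ∧
      (∀ n, φ n = 1 → n ∈ N) :=
    ⟨QuotientGroup.mk' N, QuotientGroup.mk'_surjective N, fun n hn => (QuotientGroup.eq_one_iff n).2 hn,
      fun n hn => (QuotientGroup.eq_one_iff n).1 hn⟩
  have hz1 : φ z ≠ 1 := fun h => hzN (hk2 _ h)
  have hzz : φ z * φ z = 1 := by rw [← map_mul, hz2, map_one]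
  have hCk : ∀ y ∈ C, φ y = 1 ∨ φ y = φ z := by
    intro y hy
    rcases hCN y hy with h | h
    · left; exact hk1 _ h
    · right
      have := hk1 _ h
      rw [map_mul] at this
      rw [eq_inv_of_mul_eq_one_left this, inv_eq_of_mul_eq_one_left hzz]
  refine ⟨N, hNn, φ i, φ j, φ c, φ s, ?_, ?_, ?_, ?_⟩
  · refine ⟨?_, ?_, ?_, ?_, ?_, ?_, ?_, ?_, ?_, ?_⟩
    · rw [← map_pow, hi4, map_one]
    · rw [← map_mul, hj2, map_mul]
    · rw [← map_mul, hji, map_mul, map_pow]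
    · rw [← map_pow, hk1 _ hc3]
    · rw [← map_mul, hc1.eq, map_mul]
    · rw [← map_mul, hc2.eq, map_mul, map_mul]
    · rw [← map_mul, hsz, map_mul]
    · rw [← map_mul, hs1.eq, map_mul, map_pow]
    · rw [← map_mul, hs2.eq, map_mul, map_pow]
    · have hcz : Commute (φ c) (φ z) := by
        show φ c * φ z = φ z * φ c
        rw [← map_mul, hzc, map_mul]
      have hc3' : φ c ^ 3 = 1 := by rw [← map_pow, hk1 _ hc3]
      have e : φ s * φ c * (φ s)⁻¹ = (φ c)⁻¹ * φ (c * (s * (c * s⁻¹))) := by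
        simp only [map_mul, map_inv]; group
      rcases hCk _ hu with h | h
      · rw [h, mul_one] at e
        have : (φ c)⁻¹ = φ c ^ 2 := inv_eq_of_mul_eq_one_left (by rw [← pow_succ, hc3'])
        rw [this] at e
        rw [← e]; group
      · exfalso
        rw [h] at e
        have e2 := congrArg (· ^ 3) e
        rw [conj_pow, hc3', hcz.inv_left.mul_pow, inv_pow, hc3', pow_succ, pow_two, hzz] at e2
        apply hz1
        simpa using e2.symm
  · rw [eq_top_iff]
    set S := Subgroup.closure {φ i, φ j, φ c, φ s} with hS
    have mi : φ i ∈ S := Subgroup.subset_closure (by simp)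
    have mj : φ j ∈ S := Subgroup.subset_closure (by simp)
    have mc : φ c ∈ S := Subgroup.subset_closure (by simp)
    have ms : φ s ∈ S := Subgroup.subset_closure (by simp)
    have mz : φ z ∈ S := by rw [hzdef, map_mul]; exact mul_mem mi mi
    have mC : ∀ y ∈ C, φ y ∈ S := by
      intro y hy
      rcases hCk y hy with h | h
      · rw [h]; exact one_mem _
      · rw [h]; exact mz
    have mg : φ g ∈ S := by
      rcases hcg with h | h
      · rw [← h]; exact mc
      · have : g = c * z⁻¹ := by rw [h]; group
        rw [this, map_mul, map_inv]; exact mul_mem mc (inv_mem mz)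
    have mt : φ t ∈ S := by
      have : t = ((t * t) ^ l)⁻¹ * s := by rw [hst]; group
      rw [this, map_mul]
      exact mul_mem (mC _ (inv_mem httl)) ms
    intro y' _
    obtain ⟨y, rfl⟩ := hφs y'
    obtain ⟨e, -, f, -, a, -, b, -, h1, h2⟩ := hform y
    have h3 := mC _ (hCmem _ h1 h2)
    have h4 : φ (g ^ e * t ^ f * (i ^ a * j ^ b)) ∈ S := by
      simp only [map_mul, map_pow]
      exact mul_mem (mul_mem (pow_mem mg _) (pow_mem mt _)) (mul_mem (pow_mem mi _) (pow_mem mj _))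
    have h5 := mul_mem h4 h3
    rwa [← map_mul, mul_inv_cancel_left] at h5
  · rw [← map_mul]; exact hz1
  · intro y' h1 h2
    obtain ⟨y, rfl⟩ := hφs y'
    have hq : ∀ q ∈ Subgroup.closure {i, j}, Commute (φ y) (φ q) → Commute y q := by
      intro q hq hc
      have hm1 : y * q * y⁻¹ * q⁻¹ ∈ N := by
        apply hk2
        rw [map_mul, map_mul, map_mul, map_inv, map_inv, hc.eq]; group
      have hm3 : y * q * y⁻¹ * q⁻¹ ∈ Subgroup.closure {i, j} :=
        mul_mem (hQn.conj_mem q hq y) (inv_mem hq)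
      have h7 : y * q * y⁻¹ * q⁻¹ = 1 := by
        rw [← orderOf_eq_one_iff]
        have d1 := orderOf_dvd_of_pow_eq_one (hm _ hm1)
        have d2 := orderOf_dvd_of_pow_eq_one (hq4 _ hm3)
        have hco : Nat.Coprime m 4 := by
          have : Nat.Coprime m 2 := Nat.coprime_two_right.2 (Nat.odd_iff.2 hm2)
          exact Nat.Coprime.pow_right 2 this
        exact Nat.dvd_one.1 (hco ▸ Nat.dvd_gcd d1 d2)
      show y * q = q * y
      calc y * q = (y * q * y⁻¹ * q⁻¹) * (q * y) := by group
        _ = _ := by rw [h7, one_mul]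
    rw [← map_mul, ← hzdef]
    exact hCk y (hCmem y (hq i (Subgroup.subset_closure (by simp)) h1)
      (hq j (Subgroup.subset_closure (by simp)) h2))


theorem OctRel.map {H L : Type} [Group H] [Group L] (φ : H →* L) {i j c s : H}
    (h : OctRel i j c s) : OctRel (φ i) (φ j) (φ c) (φ s) := by
  obtain ⟨h1, h2, h3, h4, h5, h6, h7, h8, h9, h10⟩ := h
  refine ⟨?_, ?_, ?_, ?_, ?_, ?_, ?_, ?_, ?_, ?_⟩ <;> simp only [← map_mul, ← map_pow]
  · rw [h1, map_one]
  · rw [h2]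
  · rw [h3]
  · rw [h4, map_one]
  · rw [h5]
  · rw [h6]
  · rw [h7]
  · rw [h8]
  · rw [h9]
  · rw [h10]

theorem oct_form {H : Type} [Group H] {i j c s : H} (h : OctRel i j c s) :
    ∃ f : QuaternionGroup 2 →* H, f (QuaternionGroup.a 1) = i ∧ f (QuaternionGroup.xa 0) = j ∧
      ∀ y ∈ Subgroup.closure {i, j, c, s}, ∃ (q : QuaternionGroup 2) (e : Fin 3) (n : Fin 2),
        y = f q * c ^ (e : ℕ) * s ^ (n : ℕ) := by
  obtain ⟨h1, h2, h3, h4, h5, h6, h7, h8, h9, h10⟩ := h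
  obtain ⟨f, hfi, hfj⟩ := q8_eval i j h1 h2 h3
  refine ⟨f, hfi, hfj, ?_⟩
  have hc : ∀ q, ∃ q', SemiconjBy c (f q) (f q') := by
    intro q
    obtain ⟨a, -, b, -, rfl⟩ := q8_form q
    refine ⟨QuaternionGroup.xa 0 ^ a * (QuaternionGroup.a 1 * QuaternionGroup.xa 0) ^ b, ?_⟩
    simp only [map_mul, map_pow, hfi, hfj]
    exact SemiconjBy.mul_right (SemiconjBy.pow_right h5 a) (SemiconjBy.pow_right h6 b)
  have hs : ∀ q, ∃ q', SemiconjBy s (f q) (f q') := by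
    intro q
    obtain ⟨a, -, b, -, rfl⟩ := q8_form q
    refine ⟨(QuaternionGroup.xa 0 ^ 3) ^ a * (QuaternionGroup.a 1 ^ 3) ^ b, ?_⟩
    simp only [map_mul, map_pow, hfi, hfj]
    exact SemiconjBy.mul_right (SemiconjBy.pow_right h8 a) (SemiconjBy.pow_right h9 b)
  have hzc : Commute c (i * i) := by
    have : SemiconjBy c (i * i) (j * j) := SemiconjBy.mul_right h5 h5
    rwa [h2] at this
  have hz : i * i = f (QuaternionGroup.a 1 * QuaternionGroup.a 1) := by rw [map_mul, hfi]
  let T : Set H := {y | ∃ (q : QuaternionGroup 2) (e n : ℕ), n < 2 ∧ y = f q * c ^ e * s ^ n}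
  have hTq : ∀ q, ∀ y ∈ T, f q * y ∈ T := by
    rintro q _ ⟨q', e, n, hn, rfl⟩
    exact ⟨q * q', e, n, hn, by rw [map_mul]; group⟩
  have hTc : ∀ y ∈ T, c * y ∈ T := by
    rintro _ ⟨q, e, n, hn, rfl⟩
    obtain ⟨q', hq'⟩ := hc q
    refine ⟨q', e + 1, n, hn, ?_⟩
    calc c * (f q * c ^ e * s ^ n) = (c * f q) * c ^ e * s ^ n := by simp only [mul_assoc]
      _ = f q' * (c * c ^ e) * s ^ n := by rw [hq'.eq]; simp only [mul_assoc]
      _ = _ := by rw [← pow_succ']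
  have hTs : ∀ y ∈ T, s * y ∈ T := by
    rintro _ ⟨q, e, n, hn, rfl⟩
    obtain ⟨q', hq'⟩ := hs q
    have hsc : s * c ^ e = (c ^ 2) ^ e * s := (SemiconjBy.pow_right (show SemiconjBy s c (c ^ 2) from h10) e).eq
    have e1 : s * (f q * c ^ e * s ^ n) = f q' * (c ^ 2) ^ e * (s * s ^ n) := by
      calc s * (f q * c ^ e * s ^ n) = (s * f q) * c ^ e * s ^ n := by simp only [mul_assoc]
        _ = f q' * (s * c ^ e) * s ^ n := by rw [hq'.eq]; simp only [mul_assoc]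
        _ = _ := by rw [hsc]; simp only [mul_assoc]
    rw [e1]
    interval_cases n
    · exact ⟨q', 2 * e, 1, by norm_num, by rw [pow_mul]; simp⟩
    · refine ⟨q' * (QuaternionGroup.a 1 * QuaternionGroup.a 1), 2 * e, 0, by norm_num, ?_⟩
      have hcz := ((hzc.pow_left 2).pow_left e).eq
      rw [pow_one, h7, pow_zero, mul_one, map_mul, ← hz, mul_assoc (f q'), hcz, pow_mul, ← mul_assoc]
  have hgen : ∀ x ∈ ({i, j, c, s} : Set H), (∀ y ∈ T, x * y ∈ T) ∧ ∃ k : ℕ, x⁻¹ = x ^ k := by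
    rintro x (rfl | rfl | rfl | rfl)
    · exact ⟨by rw [← hfi]; exact hTq _, 3, inv_eq_of_mul_eq_one_left (by rw [← pow_succ, h1])⟩
    · refine ⟨by rw [← hfj]; exact hTq _, 3, inv_eq_of_mul_eq_one_left ?_⟩
      rw [← pow_succ, ← hfj, ← map_pow, ← map_one f]; congr 1
    · exact ⟨hTc, 2, inv_eq_of_mul_eq_one_left (by rw [← pow_succ, h4])⟩
    · refine ⟨hTs, 3, inv_eq_of_mul_eq_one_left ?_⟩
      have : x ^ 3 * x = (x * x) * (x * x) := by simp only [pow_succ, pow_zero, one_mul, mul_assoc]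
      rw [this, h7, ← h1]; simp only [pow_succ, pow_zero, one_mul, mul_assoc]
  have hpow : ∀ x : H, (∀ y ∈ T, x * y ∈ T) → ∀ k : ℕ, ∀ y ∈ T, x ^ k * y ∈ T := by
    intro x hx k
    induction k with
    | zero => intro y hy; simpa using hy
    | succ k ih => intro y hy; rw [pow_succ, mul_assoc]; exact ih _ (hx y hy)
  have hT : ∀ y ∈ Subgroup.closure {i, j, c, s}, y ∈ T := by
    intro y hy
    induction hy using Subgroup.closure_induction_left with
    | one => exact ⟨1, 0, 0, by norm_num, by simp⟩
    | mul_left x hx y _ ih => exact (hgen x hx).1 y ih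
    | inv_mul_cancel x hx y _ ih =>
      obtain ⟨k, hk⟩ := (hgen x hx).2
      rw [hk]
      exact hpow x (hgen x hx).1 k y ih
  intro y hy
  obtain ⟨q, e, n, hn, rfl⟩ := hT y hy
  refine ⟨q, ⟨e % 3, Nat.mod_lt _ (by norm_num)⟩, ⟨n, hn⟩, ?_⟩
  have : c ^ e = c ^ (e % 3) := by
    conv_lhs => rw [← Nat.div_add_mod e 3, pow_add, pow_mul, h4, one_pow, one_mul]
  rw [this]

theorem oct_card_le {H : Type} [Group H] {i j c s : H} (h : OctRel i j c s) :
    Finite (Subgroup.closure {i, j, c, s}) ∧ Nat.card (Subgroup.closure {i, j, c, s}) ≤ 48 := by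
  obtain ⟨f, -, -, hf⟩ := oct_form h
  choose q e n hqen using hf
  let ψ : Subgroup.closure {i, j, c, s} → QuaternionGroup 2 × Fin 3 × Fin 2 :=
    fun y => (q y y.2, e y y.2, n y y.2)
  have hψ : Function.Injective ψ := by
    intro y y' hyy
    simp only [ψ, Prod.mk.injEq] at hyy
    apply Subtype.ext
    rw [hqen y y.2, hqen y' y'.2, hyy.1, hyy.2.1, hyy.2.2]
  refine ⟨Finite.of_injective ψ hψ, ?_⟩
  have := Nat.card_le_card_of_injective ψ hψ
  simpa [Nat.card_prod, Nat.card_eq_fintype_card, QuaternionGroup.card] using this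

theorem von_dyck {K H : Type} [Group K] [Group H] {i j c s : K} (h : OctRel i j c s)
    (hgen : Subgroup.closure {i, j, c, s} = ⊤) (hcard : Nat.card K = 48)
    {i' j' c' s' : H} (h' : OctRel i' j' c' s') :
    ∃ θ : K →* H, θ i = i' ∧ θ j = j' ∧ θ c = c' ∧ θ s = s' := by
  have hr : OctRel (i, i') (j, j') (c, c') (s, s') := by
    obtain ⟨h1, h2, h3, h4, h5, h6, h7, h8, h9, h10⟩ := h
    obtain ⟨k1, k2, k3, k4, k5, k6, k7, k8, k9, k10⟩ := h'
    refine ⟨?_, ?_, ?_, ?_, ?_, ?_, ?_, ?_, ?_, ?_⟩ <;> apply Prod.ext <;> assumption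
  obtain ⟨hfin, hle⟩ := oct_card_le hr
  set D := Subgroup.closure {(i, i'), (j, j'), (c, c'), (s, s')} with hD
  let p : D →* K := (MonoidHom.fst K H).comp D.subtype
  have m1 : (i, i') ∈ D := Subgroup.subset_closure (by simp)
  have m2 : (j, j') ∈ D := Subgroup.subset_closure (by simp)
  have m3 : (c, c') ∈ D := Subgroup.subset_closure (by simp)
  have m4 : (s, s') ∈ D := Subgroup.subset_closure (by simp)
  have hp : Function.Surjective p := by
    rw [← MonoidHom.range_eq_top, eq_top_iff, ← hgen, Subgroup.closure_le]
    rintro x (rfl | rfl | rfl | rfl)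
    · exact ⟨⟨_, m1⟩, rfl⟩
    · exact ⟨⟨_, m2⟩, rfl⟩
    · exact ⟨⟨_, m3⟩, rfl⟩
    · exact ⟨⟨_, m4⟩, rfl⟩
  have hfK : Finite K := Nat.finite_of_card_ne_zero (by rw [hcard]; norm_num)
  have hbij : Function.Bijective p := by
    rw [Nat.bijective_iff_surjective_and_card]
    refine ⟨hp, le_antisymm ?_ ?_⟩
    · rw [hcard]; exact hle
    · exact Nat.card_le_card_of_surjective p hp
  let e : D ≃* K := MulEquiv.ofBijective p hbij
  refine ⟨((MonoidHom.snd K H).comp D.subtype).comp e.symm.toMonoidHom, ?_, ?_, ?_, ?_⟩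
  · have : e.symm i = ⟨_, m1⟩ := by rw [MulEquiv.symm_apply_eq]; rfl
    show ((e.symm i : D) : K × H).2 = i'
    rw [this]
  · have : e.symm j = ⟨_, m2⟩ := by rw [MulEquiv.symm_apply_eq]; rfl
    show ((e.symm j : D) : K × H).2 = j'
    rw [this]
  · have : e.symm c = ⟨_, m3⟩ := by rw [MulEquiv.symm_apply_eq]; rfl
    show ((e.symm c : D) : K × H).2 = c'
    rw [this]
  · have : e.symm s = ⟨_, m4⟩ := by rw [MulEquiv.symm_apply_eq]; rfl
    show ((e.symm s : D) : K × H).2 = s'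
    rw [this]


theorem oct_card {K : Type} [Group K] {i j c s : K} (h : OctRel i j c s)
    (hgen : Subgroup.closure {i, j, c, s} = ⊤) (hz : i * i ≠ 1) :
    Nat.card K = 48 ∧ ∃ f : QuaternionGroup 4 →* K, Function.Injective f := by
  obtain ⟨hfin, hle⟩ := oct_card_le h
  rw [hgen] at hfin hle
  have hfK : Finite K := Finite.of_equiv _ Subgroup.topEquiv.toEquiv
  rw [Subgroup.card_top] at hle
  obtain ⟨h1, h2, h3, h4, h5, h6, h7, h8, h9, h10⟩ := h
  obtain ⟨f, hfi, hfj⟩ := q8_eval i j h1 h2 h3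
  have hrr : (s * i) * (s * i) = f (QuaternionGroup.xa 0 ^ 3 * QuaternionGroup.a 1 ^ 3) := by
    rw [map_mul, map_pow, map_pow, hfi, hfj]
    calc (s * i) * (s * i) = (s * i) * s * i := by simp only [mul_assoc]
      _ = j ^ 3 * (s * s) * i := by rw [h8]; simp only [mul_assoc]
      _ = _ := by rw [h7]; simp only [pow_succ, pow_zero, one_mul, mul_assoc]
  have hr4 : (s * i) ^ 4 = i * i := by
    have : (s * i) ^ 4 = ((s * i) * (s * i)) * ((s * i) * (s * i)) := by
      simp only [pow_succ, pow_zero, one_mul, mul_assoc]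
    rw [this, hrr, ← map_mul, ← hfi, ← map_mul]
    congr 1
  have hr8 : (s * i) ^ 8 = 1 := by
    rw [show 8 = 4 * 2 from rfl, pow_mul, hr4, ← h1]
    simp only [pow_succ, pow_zero, one_mul, mul_assoc]
  have hord : orderOf (s * i) = 2 * 4 := by
    have := orderOf_eq_prime_pow (p := 2) (n := 2) (x := s * i) (by norm_num; rw [hr4]; exact hz)
      (by norm_num; exact hr8)
    simpa using this
  have hconj : s * (s * i) * s⁻¹ = (s * i)⁻¹ := by
    rw [← mul_assoc, h7, mul_inv_rev]
    congr 1
    apply eq_inv_of_mul_eq_one_left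
    rw [← h1]; simp only [pow_succ, pow_zero, one_mul, mul_assoc]
  have hnot : s ∉ Subgroup.zpowers (s * i) := by
    rintro ⟨k, hk⟩
    have hk' : (s * i) ^ k = s := hk
    have hcomm : Commute s (s * i) := by
      have h0 : Commute ((s * i) ^ k) (s * i) := (Commute.refl (s * i)).zpow_left k
      rwa [hk'] at h0
    rw [hcomm.eq, mul_inv_cancel_right] at hconj
    have h2' : (s * i) * (s * i) = 1 := by
      nth_rewrite 1 [hconj]
      exact inv_mul_cancel _
    apply hz
    rw [← hr4]
    have : (s * i) ^ 4 = ((s * i) * (s * i)) * ((s * i) * (s * i)) := by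
      simp only [pow_succ, pow_zero, one_mul, mul_assoc]
    rw [this, h2', one_mul]
  obtain ⟨g, -, -, hg⟩ := quat_hom_inj 4 (s * i) s hord (by rw [h7, hr4]) hconj hnot
  have d16 : 16 ∣ Nat.card K := by
    have := Subgroup.card_dvd_of_injective g hg
    simpa [Nat.card_eq_fintype_card, QuaternionGroup.card] using this
  have hij : i ≠ j := by
    rintro rfl
    apply hz
    have h' : i * i = i ^ 3 * i := h3
    rw [← pow_succ, h1] at h'
    exact h'
  have hc1 : c ≠ 1 := by
    rintro rfl
    rw [one_mul, mul_one] at h5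
    exact hij h5
  have d3 : 3 ∣ Nat.card K := by
    have := orderOf_eq_prime (p := 3) h4 hc1
    rw [← this]
    exact orderOf_dvd_natCard c
  have d48 : 48 ∣ Nat.card K :=
    Nat.Coprime.mul_dvd_of_dvd_of_dvd (by norm_num) d16 d3
  exact ⟨le_antisymm hle (Nat.le_of_dvd Nat.card_pos d48), g, hg⟩

theorem oct_octrel_perm : OctRel (1 : Equiv.Perm (Fin 3)) 1 (finRotate 3) (Equiv.swap 0 1) := by
  refine ⟨?_, ?_, ?_, ?_, ?_, ?_, ?_, ?_, ?_, ?_⟩ <;> decide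

theorem oct_perm_words : ∀ (e : Fin 3) (n : Fin 2),
    (finRotate 3) ^ (e : ℕ) * (Equiv.swap 0 1 : Equiv.Perm (Fin 3)) ^ (n : ℕ) = 1 → e = 0 ∧ n = 0 := by
  decide

set_option maxRecDepth 100000 in
theorem oct_perm_16 : ∀ σ : Equiv.Perm (Fin 3), σ ^ 16 = 1 →
    (finRotate 3 * σ * (finRotate 3)⁻¹ * σ⁻¹) ^ 16 = 1 → σ = 1 := by
  decide

theorem oct_perm_surj : ∀ σ : Equiv.Perm (Fin 3), ∃ (e : Fin 3) (n : Fin 2),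
    σ = (finRotate 3) ^ (e : ℕ) * (Equiv.swap 0 1 : Equiv.Perm (Fin 3)) ^ (n : ℕ) := by
  decide

theorem q8_dich : ∀ q : QuaternionGroup 2, q = 1 ∨ q = QuaternionGroup.a 1 * QuaternionGroup.a 1 ∨
    q * q = QuaternionGroup.a 1 * QuaternionGroup.a 1 := by decide

/-- structure of the quotient -/
theorem oct_struct {K : Type} [Group K] {i j c s : K} (h : OctRel i j c s)
    (hgen : Subgroup.closure {i, j, c, s} = ⊤) (hz : i * i ≠ 1) :
    ∃ (f : QuaternionGroup 2 →* K) (π : K →* Equiv.Perm (Fin 3)), Function.Injective f ∧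
      f (QuaternionGroup.a 1) = i ∧ f (QuaternionGroup.xa 0) = j ∧
      π c = finRotate 3 ∧ π s = Equiv.swap 0 1 ∧ Function.Surjective π ∧ π.ker = f.range := by
  obtain ⟨hcard, -⟩ := oct_card h hgen hz
  obtain ⟨f, hfi, hfj, hf⟩ := oct_form h
  obtain ⟨π, hi, hj, hc, hs⟩ := von_dyck h hgen hcard oct_octrel_perm
  have hπf : ∀ q, π (f q) = 1 := by
    intro q
    obtain ⟨a, -, b, -, rfl⟩ := q8_form q
    simp only [map_mul, map_pow, hfi, hfj, hi, hj, one_pow, mul_one]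
  refine ⟨f, π, ?_, hfi, hfj, hc, hs, ?_, ?_⟩
  · rw [injective_iff_map_eq_one]
    intro q hq
    rcases q8_dich q with h0 | h0 | h0
    · exact h0
    · exfalso; apply hz; rw [← hfi, ← map_mul, ← h0, hq]
    · exfalso; apply hz; rw [← hfi, ← map_mul, ← h0, map_mul, hq, one_mul]
  · intro σ
    obtain ⟨e, n, rfl⟩ := oct_perm_surj σ
    exact ⟨c ^ (e : ℕ) * s ^ (n : ℕ), by rw [map_mul, map_pow, map_pow, hc, hs]⟩
  · ext y
    constructor
    · intro hy
      obtain ⟨q, e, n, rfl⟩ := hf y (by rw [hgen]; trivial)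
      rw [MonoidHom.mem_ker, map_mul, map_mul, hπf, one_mul, map_pow, map_pow, hc, hs] at hy
      obtain ⟨rfl, rfl⟩ := oct_perm_words e n hy
      exact ⟨q, by simp⟩
    · rintro ⟨q, rfl⟩
      exact hπf q

theorem oct_is {K : Type} [Group K] {i j c s : K} (h : OctRel i j c s)
    (hgen : Subgroup.closure {i, j, c, s} = ⊤) (hz : i * i ≠ 1)
    (hC : ∀ y, Commute y i → Commute y j → y = 1 ∨ y = i * i) : IsBinaryOctahedral K := by
  obtain ⟨hcard, g, hg⟩ := oct_card h hgen hz
  obtain ⟨f, π, hfinj, hfi, hfj, hπc, -, -, hker⟩ := oct_struct h hgen hz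
  have hfK : Finite K := Nat.finite_of_card_ne_zero (by rw [hcard]; norm_num)
  have hfc : Nat.card f.range = 8 := by
    rw [← Nat.card_congr (MonoidHom.ofInjective hfinj).toEquiv]
    simp [Nat.card_eq_fintype_card, QuaternionGroup.card]
  have hgc : Nat.card g.range = 16 := by
    rw [← Nat.card_congr (MonoidHom.ofInjective hg).toEquiv]
    simp [Nat.card_eq_fintype_card, QuaternionGroup.card]
  haveI : Fact (Nat.Prime 2) := ⟨Nat.prime_two⟩
  haveI : Fact (Nat.Prime 3) := ⟨Nat.prime_three⟩
  have hfn : f.range.Normal := by rw [← hker]; infer_instance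
  have hf2 : IsPGroup 2 f.range := IsPGroup.of_card (n := 3) (by rw [hfc]; norm_num)
  refine ⟨hcard, ⟨f.range, ⟨⟨hfn, hf2.isNilpotent⟩, ?_⟩, ⟨(MonoidHom.ofInjective hfinj).symm⟩⟩, ?_⟩
  · rintro N ⟨hN, hnil⟩ y hy
    -- the Sylow 3-subgroup of N is trivial
    have hsyl := (Group.isNilpotent_of_finite_tfae (G := N)).out 0 3 rfl rfl |>.mp hnil
    obtain ⟨P⟩ : Nonempty (Sylow 3 N) := inferInstance
    have hPn : (P : Subgroup N).Normal := hsyl 3 inferInstance P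
    have hPc : (P : Subgroup N).Characteristic := Sylow.characteristic_of_normal P hPn
    have hMn : ((P : Subgroup N).map N.subtype).Normal :=
      ConjAct.normal_of_characteristic_of_normal
    have hM3 : IsPGroup 3 ((P : Subgroup N).map N.subtype) := P.2.map _
    have hdis : Disjoint ((P : Subgroup N).map N.subtype) f.range :=
      IsPGroup.disjoint_of_ne 3 2 (by norm_num) _ _ hM3 hf2
    have hP1 : (P : Subgroup N) = ⊥ := by
      rw [eq_bot_iff]
      intro x hx
      have hxm : (x : K) ∈ (P : Subgroup N).map N.subtype := ⟨x, hx, rfl⟩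
      have c1 : Commute (x : K) i := Subgroup.commute_of_normal_of_disjoint _ _ hMn hfn hdis _ _ hxm ⟨_, hfi⟩
      have c2 : Commute (x : K) j := Subgroup.commute_of_normal_of_disjoint _ _ hMn hfn hdis _ _ hxm ⟨_, hfj⟩
      rcases hC _ c1 c2 with h0 | h0
      · exact Subtype.ext h0
      · exfalso
        have : (x : K) ∈ f.range := by
          rw [h0, ← hfi]; exact ⟨_, map_mul f _ _⟩
        have := (Subgroup.disjoint_def.1 hdis) hxm this
        rw [this] at h0
        exact hz h0.symm
    have h3 : ¬ 3 ∣ Nat.card N := by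
      intro hd
      have := Sylow.dvd_card_of_dvd_card P hd
      rw [hP1, Subgroup.card_bot] at this
      norm_num at this
    have h16 : Nat.card N ∣ 16 := by
      have hd : Nat.card N ∣ 16 * 3 := by
        have := Subgroup.card_subgroup_dvd_card N
        rw [hcard] at this; exact this
      exact Nat.Coprime.dvd_of_dvd_mul_right
        ((Nat.Prime.coprime_iff_not_dvd Nat.prime_three).2 h3).symm hd
    have hpow : ∀ x ∈ N, x ^ 16 = 1 := by
      intro x hx
      obtain ⟨m, hm⟩ := h16
      have := pow_card_eq_one' (x := (⟨x, hx⟩ : N))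
      rw [hm, pow_mul]
      have h2 : x ^ Nat.card N = 1 := by
        have h3 := congrArg (N.subtype) this
        rwa [map_pow, map_one] at h3
      rw [h2, one_pow]
    rw [← hker, MonoidHom.mem_ker]
    apply oct_perm_16
    · rw [← map_pow, hpow y hy, map_one]
    · rw [← hπc, ← map_inv, ← map_inv, ← map_mul, ← map_mul, ← map_mul, ← map_pow, hpow, map_one]
      exact mul_mem (hN.conj_mem y hy c) (inv_mem hy)
  · intro P
    have hS : Nat.card g.range = 2 ^ (Nat.card K).factorization 2 := by
      rw [hgc, hcard]
      have : Nat.factorization 48 2 = 4 := by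
        rw [Nat.factorization_def _ Nat.prime_two]
        have : (48 : ℕ) = 2 ^ 4 * 3 := by norm_num
        rw [this, padicValNat.mul (by norm_num) (by norm_num), padicValNat.prime_pow,
          padicValNat.eq_zero_of_not_dvd (by norm_num)]
      rw [this]; norm_num
    let S : Sylow 2 K := Sylow.ofCard g.range hS
    exact ⟨(Sylow.equiv P S).trans (MonoidHom.ofInjective hg).symm⟩


open CategoryTheory

theorem cod_mem {G : Type} [Group G] [Finite G] {ι : Type} [Fintype ι] [DecidableEq ι] [Nonempty ι]
    (R : G →* (Matrix ι ι ℂ)ˣ)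
    (hsc : ∀ M : Matrix ι ι ℂ, (∀ g, M * (R g : Matrix ι ι ℂ) = (R g : Matrix ι ι ℂ) * M) →
      ∃ a : ℂ, M = a • 1) : R.ker.index / Fintype.card ι ∈ codSet G := by
  haveI : NeZero (Nat.card G : ℂ) := ⟨by exact_mod_cast Nat.card_pos.ne'⟩
  let ρ : Representation ℂ G (ι → ℂ) :=
    (Matrix.toLinAlgEquiv' (R := ℂ) (n := ι)).toAlgHom.toRingHom.toMonoidHom.comp
      ((Units.coeHom _).comp R)
  have hρ : ∀ g, ρ g = Matrix.toLin' (R g : Matrix ι ι ℂ) := fun g => rfl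
  let V : FDRep ℂ G := FDRep.of ρ
  have hVρ : V.ρ = ρ := rfl
  have hker : charKer V = R.ker := by
    ext g
    unfold charKer
    rw [MonoidHom.mem_ker, MonoidHom.mem_ker, Units.ext_iff, Representation.asGroupHom_apply, hVρ, hρ,
      Units.ext_iff]
    constructor
    · intro h
      apply (Matrix.toLin' (R := ℂ) (n := ι) (m := ι)).injective
      exact h.trans (Matrix.toLin'_one).symm
    · intro h
      rw [h, Units.val_one, Matrix.toLin'_one]; rfl
  have hdim : Module.finrank ℂ V = Fintype.card ι := Module.finrank_fintype_fun_eq_card ℂ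
  refine ⟨V, ?_, by unfold codeg; rw [hker, hdim]⟩
  rw [FDRep.simple_iff_end_is_rank_one]
  refine finrank_eq_one (𝟙 V) ?_ ?_
  · intro h0
    have h1 : ((𝟙 V : V ⟶ V).hom.hom.hom : (ι → ℂ) →ₗ[ℂ] (ι → ℂ)) (fun _ => 1) = 0 := by
      rw [h0]; rfl
    have h2 : (fun _ : ι => (1 : ℂ)) = 0 := h1
    have := congrFun h2 (Classical.arbitrary ι)
    simp at this
  · intro w
    let L : (ι → ℂ) →ₗ[ℂ] (ι → ℂ) := w.hom.hom.hom
    have hL : ∀ g, L ∘ₗ ρ g = ρ g ∘ₗ L := by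
      intro g
      have := w.comm g
      have h2 := congrArg (fun t => (t.hom.hom : (ι → ℂ) →ₗ[ℂ] (ι → ℂ))) this
      exact h2
    obtain ⟨a, ha⟩ := hsc (LinearMap.toMatrix' L) (by
      intro g
      have := congrArg LinearMap.toMatrix' (hL g)
      rw [LinearMap.toMatrix'_comp, LinearMap.toMatrix'_comp, hρ, LinearMap.toMatrix'_toLin'] at this
      exact this)
    refine ⟨a, ?_⟩
    have hLa : L = a • LinearMap.id := by
      apply LinearMap.toMatrix'.injective
      rw [ha, map_smul, LinearMap.toMatrix'_id]
    apply Action.Hom.ext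
    apply InducedCategory.hom_ext
    apply ModuleCat.hom_ext
    exact hLa.symm

theorem codSet_finite (G : Type) [Group G] [Finite G] : (codSet G).Finite := by
  apply (Set.finite_Iic (Nat.card G)).subset
  rintro n ⟨V, -, rfl⟩
  exact (Nat.div_le_self _ _).trans (Nat.le_of_dvd Nat.card_pos (Subgroup.index_dvd_card _))

theorem units_oct {M : Type} [Monoid M] (i j c s : M) (h1 : i ^ 4 = 1) (h2 : j * j = i * i)
    (h3 : j * i = i ^ 3 * j) (h4 : c ^ 3 = 1) (h5 : c * i = j * c) (h6 : c * j = i * j * c)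
    (h7 : s * s = i * i) (h8 : s * i = j ^ 3 * s) (h9 : s * j = i ^ 3 * s) (h10 : s * c = c ^ 2 * s) :
    ∃ i' j' c' s' : Mˣ, OctRel i' j' c' s' ∧ (i' : M) = i ∧ (j' : M) = j ∧ (c' : M) = c ∧
      (s' : M) = s := by
  have hp : ∀ x : M, x * x = i * i → x ^ 4 = 1 := by
    intro x hx
    have : ∀ x : M, x ^ 4 = (x * x) * (x * x) := fun x => by
      simp only [pow_succ, pow_zero, one_mul, mul_assoc]
    rw [this, hx, ← this, h1]
  refine ⟨Units.ofPowEqOne i 4 h1 (by norm_num), Units.ofPowEqOne j 4 (hp j h2) (by norm_num),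
    Units.ofPowEqOne c 3 h4 (by norm_num), Units.ofPowEqOne s 4 (hp s h7) (by norm_num),
    ⟨?_, ?_, ?_, ?_, ?_, ?_, ?_, ?_, ?_, ?_⟩, rfl, rfl, rfl, rfl⟩ <;> apply Units.ext <;> assumption

theorem mat2_ext {a b c d a' b' c' d' : ℂ} (h1 : a = a') (h2 : b = b') (h3 : c = c') (h4 : d = d') :
    !![a, b; c, d] = !![a', b'; c', d'] := by
  rw [h1, h2, h3, h4]

theorem oct2 : ∃ i j c s : (Matrix (Fin 2) (Fin 2) ℂ)ˣ, OctRel i j c s ∧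
    (∀ M : Matrix (Fin 2) (Fin 2) ℂ, M * i = i * M → M * j = j * M → ∃ a : ℂ, M = a • 1) ∧
    i * i ≠ 1 ∧ (c : Matrix (Fin 2) (Fin 2) ℂ) ≠ 0 ∧ (s : Matrix (Fin 2) (Fin 2) ℂ) ≠ 0 := by
  obtain ⟨w, hw⟩ : ∃ w : ℂ, 2 * w ^ 2 = 1 := by
    obtain ⟨w, hw⟩ := IsAlgClosed.exists_pow_nat_eq (1 / 2 : ℂ) (n := 2) (by norm_num)
    exact ⟨w, by rw [hw]; norm_num⟩
  obtain ⟨u, hu⟩ : ∃ u : ℂ, u ^ 2 = -1 := ⟨Complex.I, Complex.I_sq⟩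
  obtain ⟨i, j, c, s, h, hi, hj, -, -⟩ := units_oct
    (!![u, 0; 0, -u] : Matrix (Fin 2) (Fin 2) ℂ) !![0, 1; -1, 0]
    !![-(1 + u) / 2, -(1 + u) / 2; (1 - u) / 2, -(1 - u) / 2]
    !![w * u, -w; w, -(w * u)]
    (by simp only [pow_succ, pow_zero, one_mul, Matrix.mul_fin_two, Matrix.one_fin_two]; apply mat2_ext <;> grind)
    (by simp only [pow_succ, pow_zero, one_mul, Matrix.mul_fin_two, Matrix.one_fin_two]; apply mat2_ext <;> grind)
    (by simp only [pow_succ, pow_zero, one_mul, Matrix.mul_fin_two, Matrix.one_fin_two]; apply mat2_ext <;> grind)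
    (by simp only [pow_succ, pow_zero, one_mul, Matrix.mul_fin_two, Matrix.one_fin_two]; apply mat2_ext <;> grind)
    (by simp only [pow_succ, pow_zero, one_mul, Matrix.mul_fin_two, Matrix.one_fin_two]; apply mat2_ext <;> grind)
    (by simp only [pow_succ, pow_zero, one_mul, Matrix.mul_fin_two, Matrix.one_fin_two]; apply mat2_ext <;> grind)
    (by simp only [pow_succ, pow_zero, one_mul, Matrix.mul_fin_two, Matrix.one_fin_two]; apply mat2_ext <;> grind)
    (by simp only [pow_succ, pow_zero, one_mul, Matrix.mul_fin_two, Matrix.one_fin_two]; apply mat2_ext <;> grind)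
    (by simp only [pow_succ, pow_zero, one_mul, Matrix.mul_fin_two, Matrix.one_fin_two]; apply mat2_ext <;> grind)
    (by simp only [pow_succ, pow_zero, one_mul, Matrix.mul_fin_two, Matrix.one_fin_two]; apply mat2_ext <;> grind)
  refine ⟨i, j, c, s, h, ?_, ?_, c.ne_zero, s.ne_zero⟩
  · intro M h1 h2
    have hu0 : u ≠ 0 := by rintro rfl; norm_num at hu
    rw [hi] at h1
    rw [hj] at h2
    rw [Matrix.eta_fin_two M] at h1 h2 ⊢
    rw [Matrix.mul_fin_two, Matrix.mul_fin_two] at h1 h2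
    have e1 := congrFun (congrFun h1 0) 1
    have e2 := congrFun (congrFun h1 1) 0
    have e3 := congrFun (congrFun h2 0) 1
    simp at e1 e2 e3
    have f1 : M 0 1 = 0 := by grind
    have f2 : M 1 0 = 0 := by grind
    refine ⟨M 0 0, ?_⟩
    rw [Matrix.one_fin_two, f1, f2]
    ext a b
    fin_cases a <;> fin_cases b <;> simp [e3]
  · intro h0
    have h1 := congrArg Units.val h0
    rw [Units.val_mul, hi, Units.val_one, Matrix.mul_fin_two] at h1
    have e1 := congrFun (congrFun h1 0) 0
    simp at e1
    rw [← pow_two, hu] at e1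
    norm_num at e1


theorem cod_of {G K : Type} [Group G] [Group K] [Finite G] {ι : Type} [Fintype ι] [DecidableEq ι]
    [Nonempty ι] (φ : G →* K) (hφ : Function.Surjective φ) (R : K →* (Matrix ι ι ℂ)ˣ)
    (hsc : ∀ M : Matrix ι ι ℂ, (∀ y, M * (R y : Matrix ι ι ℂ) = (R y : Matrix ι ι ℂ) * M) →
      ∃ a : ℂ, M = a • 1) (m d : ℕ) (hm : R.ker.index = m) (hd : m / Fintype.card ι = d) :
    d ∈ codSet G := by
  have h1 := cod_mem (R.comp φ) (by
    intro M hM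
    apply hsc M
    intro y
    obtain ⟨g, rfl⟩ := hφ y
    exact hM g)
  have h2 : (R.comp φ).ker.index = R.ker.index := by
    rw [← MonoidHom.comap_ker]
    exact Subgroup.index_comap_of_surjective _ hφ
  rw [h2, hm, hd] at h1
  exact h1

theorem oct_faithful {K H : Type} [Group K] [Group H] {i j c s : K} (h : OctRel i j c s)
    (hgen : Subgroup.closure {i, j, c, s} = ⊤) (hz : i * i ≠ 1)
    (hC : ∀ y, Commute y i → Commute y j → y = 1 ∨ y = i * i) (R : K →* H) (hR : R (i * i) ≠ 1) :
    R.ker.index = 48 := by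
  obtain ⟨hcard, -⟩ := oct_card h hgen hz
  obtain ⟨f, π, hfinj, hfi, hfj, -, -, -, hker⟩ := oct_struct h hgen hz
  have hfn : f.range.Normal := by rw [← hker]; infer_instance
  have hdis : Disjoint R.ker f.range := by
    rw [Subgroup.disjoint_def]
    rintro _ hx ⟨q, rfl⟩
    rw [MonoidHom.mem_ker] at hx
    rcases q8_dich q with h0 | h0 | h0
    · rw [h0, map_one]
    · exfalso; apply hR; rw [← hfi, ← map_mul, ← h0, hx]
    · exfalso; apply hR; rw [← hfi, ← map_mul, ← h0, map_mul, map_mul, hx, one_mul]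
  have hbot : R.ker = ⊥ := by
    rw [eq_bot_iff]
    intro y hy
    have c1 : Commute y i :=
      Subgroup.commute_of_normal_of_disjoint _ _ inferInstance hfn hdis _ _ hy ⟨_, hfi⟩
    have c2 : Commute y j :=
      Subgroup.commute_of_normal_of_disjoint _ _ inferInstance hfn hdis _ _ hy ⟨_, hfj⟩
    rcases hC y c1 c2 with h0 | h0
    · exact h0
    · exfalso; apply hR; rw [← h0]; exact hy
  rw [hbot, Subgroup.index_bot, hcard]

/-- integral matrices to complex matrices -/
noncomputable def intUnits (ι : Type) [Fintype ι] [DecidableEq ι] :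
    (Matrix ι ι ℤ)ˣ →* (Matrix ι ι ℂ)ˣ :=
  Units.map (((Int.castRingHom ℂ).mapMatrix : Matrix ι ι ℤ →+* Matrix ι ι ℂ) : Matrix ι ι ℤ →* Matrix ι ι ℂ)

theorem intUnits_val {ι : Type} [Fintype ι] [DecidableEq ι] (A : (Matrix ι ι ℤ)ˣ) :
    (intUnits ι A : Matrix ι ι ℂ) = (A : Matrix ι ι ℤ).map (fun x => (x : ℂ)) := rfl

theorem intUnits_inj {ι : Type} [Fintype ι] [DecidableEq ι] : Function.Injective (intUnits ι) := by
  intro A B hAB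
  apply Units.ext
  ext a b
  have := congrArg (fun t : (Matrix ι ι ℂ)ˣ => (t : Matrix ι ι ℂ) a b) hAB
  simpa [intUnits_val] using this

theorem intUnits_ker {K ι : Type} [Group K] [Fintype ι] [DecidableEq ι] (R : K →* (Matrix ι ι ℤ)ˣ) :
    ((intUnits ι).comp R).ker = R.ker := by
  ext y
  rw [MonoidHom.mem_ker, MonoidHom.mem_ker, MonoidHom.comp_apply]
  constructor
  · intro h; apply intUnits_inj; rw [h, map_one]
  · intro h; rw [h, map_one]

theorem oct3_words : ∀ (a : Fin 4) (b : Fin 2) (e : Fin 3) (n : Fin 2),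
    (!![1, 0, 0; 0, -1, 0; 0, 0, -1] : Matrix (Fin 3) (Fin 3) ℤ) ^ (a : ℕ) *
      (!![-1, 0, 0; 0, 1, 0; 0, 0, -1]) ^ (b : ℕ) * (!![0, 0, 1; 1, 0, 0; 0, 1, 0]) ^ (e : ℕ) *
      (!![0, 1, 0; 1, 0, 0; 0, 0, 1]) ^ (n : ℕ) = 1 → (a = 0 ∨ a = 2) ∧ b = 0 ∧ e = 0 ∧ n = 0 := by
  decide

theorem oct3 : ∃ i j c s : (Matrix (Fin 3) (Fin 3) ℤ)ˣ, OctRel i j c s ∧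
    (i : Matrix (Fin 3) (Fin 3) ℤ) = !![1, 0, 0; 0, -1, 0; 0, 0, -1] ∧
    (j : Matrix (Fin 3) (Fin 3) ℤ) = !![-1, 0, 0; 0, 1, 0; 0, 0, -1] ∧
    (c : Matrix (Fin 3) (Fin 3) ℤ) = !![0, 0, 1; 1, 0, 0; 0, 1, 0] ∧
    (s : Matrix (Fin 3) (Fin 3) ℤ) = !![0, 1, 0; 1, 0, 0; 0, 0, 1] := by
  apply units_oct <;> decide

theorem octS3_words : ∀ (e : Fin 3) (n : Fin 2),
    (!![0, -1; 1, -1] : Matrix (Fin 2) (Fin 2) ℤ) ^ (e : ℕ) * (!![0, 1; 1, 0]) ^ (n : ℕ) = 1 →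
      e = 0 ∧ n = 0 := by
  decide

theorem octS3 : ∃ i j c s : (Matrix (Fin 2) (Fin 2) ℤ)ˣ, OctRel i j c s ∧
    (i : Matrix (Fin 2) (Fin 2) ℤ) = 1 ∧
    (j : Matrix (Fin 2) (Fin 2) ℤ) = 1 ∧
    (c : Matrix (Fin 2) (Fin 2) ℤ) = !![0, -1; 1, -1] ∧
    (s : Matrix (Fin 2) (Fin 2) ℤ) = !![0, 1; 1, 0] := by
  apply units_oct <;> decide

theorem octS3_comm (M : Matrix (Fin 2) (Fin 2) ℂ)
    (h1 : M * !![0, -1; 1, -1] = !![0, -1; 1, -1] * M) (h2 : M * !![0, 1; 1, 0] = !![0, 1; 1, 0] * M) :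
    ∃ a : ℂ, M = a • 1 := by
  rw [Matrix.eta_fin_two M] at h1 h2 ⊢
  rw [Matrix.mul_fin_two, Matrix.mul_fin_two] at h1 h2
  have e1 := congrFun (congrFun h1 0) 0
  have e2 := congrFun (congrFun h2 0) 0
  have e3 := congrFun (congrFun h2 0) 1
  have e4 := congrFun (congrFun h1 0) 1
  simp at e1 e2 e3 e4
  have f1 : M 0 1 = 0 := by grind
  have f2 : M 1 0 = 0 := by grind
  refine ⟨M 0 0, ?_⟩
  rw [Matrix.one_fin_two, f1, f2]
  ext a b
  fin_cases a <;> fin_cases b <;> simp [e3]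

theorem oct3_comm (M : Matrix (Fin 3) (Fin 3) ℂ)
    (h1 : M * !![1, 0, 0; 0, -1, 0; 0, 0, -1] = !![1, 0, 0; 0, -1, 0; 0, 0, -1] * M)
    (h2 : M * !![-1, 0, 0; 0, 1, 0; 0, 0, -1] = !![-1, 0, 0; 0, 1, 0; 0, 0, -1] * M)
    (h3 : M * !![0, 0, 1; 1, 0, 0; 0, 1, 0] = !![0, 0, 1; 1, 0, 0; 0, 1, 0] * M) :
    ∃ a : ℂ, M = a • 1 := by
  have e1 := fun a b => congrFun (congrFun h1 a) b
  have e2 := fun a b => congrFun (congrFun h2 a) b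
  have e3 := fun a b => congrFun (congrFun h3 a) b
  simp only [Matrix.mul_apply, Fin.sum_univ_three] at e1 e2 e3
  have a1 := e1 0 1
  have a2 := e1 1 0
  have a3 := e1 0 2
  have a4 := e1 2 0
  have a5 := e2 1 2
  have a6 := e2 2 1
  have a7 := e3 0 2
  have a8 := e3 1 0
  simp at a1 a2 a3 a4 a5 a6 a7 a8
  refine ⟨M 0 0, ?_⟩
  ext a b
  fin_cases a <;> fin_cases b <;> simp <;> grind

/-- Kronecker product on units -/
noncomputable def kronUnits : (Matrix (Fin 2) (Fin 2) ℂ)ˣ × (Matrix (Fin 2) (Fin 2) ℂ)ˣ →*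
    (Matrix (Fin 2 × Fin 2) (Fin 2 × Fin 2) ℂ)ˣ :=
  (Units.map (⟨⟨fun p : Matrix (Fin 2) (Fin 2) ℂ × Matrix (Fin 2) (Fin 2) ℂ =>
      Matrix.kroneckerMap (· * ·) p.1 p.2, Matrix.one_kronecker_one⟩, fun p q =>
      Matrix.mul_kronecker_mul p.1 q.1 p.2 q.2⟩ :
    Matrix (Fin 2) (Fin 2) ℂ × Matrix (Fin 2) (Fin 2) ℂ →* Matrix (Fin 2 × Fin 2) (Fin 2 × Fin 2) ℂ)).comp
    (MulEquiv.prodUnits.symm.toMonoidHom)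

theorem kronUnits_val (A B : (Matrix (Fin 2) (Fin 2) ℂ)ˣ) :
    (kronUnits (A, B) : Matrix (Fin 2 × Fin 2) (Fin 2 × Fin 2) ℂ) =
      Matrix.kroneckerMap (· * ·) (A : Matrix (Fin 2) (Fin 2) ℂ) (B : Matrix (Fin 2) (Fin 2) ℂ) := rfl


theorem kron_comm (i j c s : (Matrix (Fin 2) (Fin 2) ℂ)ˣ) (C S : Matrix (Fin 2) (Fin 2) ℂ)
    (hij : ∀ M : Matrix (Fin 2) (Fin 2) ℂ, M * i = i * M → M * j = j * M → ∃ a : ℂ, M = a • 1)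
    (hc : (c : Matrix (Fin 2) (Fin 2) ℂ) ≠ 0) (hs : (s : Matrix (Fin 2) (Fin 2) ℂ) ≠ 0)
    (hCS : ∀ M : Matrix (Fin 2) (Fin 2) ℂ, M * C = C * M → M * S = S * M → ∃ a : ℂ, M = a • 1)
    (M : Matrix (Fin 2 × Fin 2) (Fin 2 × Fin 2) ℂ)
    (h1 : M * Matrix.kroneckerMap (· * ·) (1 : Matrix (Fin 2) (Fin 2) ℂ) (i : Matrix (Fin 2) (Fin 2) ℂ) =
      Matrix.kroneckerMap (· * ·) (1 : Matrix (Fin 2) (Fin 2) ℂ) (i : Matrix (Fin 2) (Fin 2) ℂ) * M)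
    (h2 : M * Matrix.kroneckerMap (· * ·) (1 : Matrix (Fin 2) (Fin 2) ℂ) (j : Matrix (Fin 2) (Fin 2) ℂ) =
      Matrix.kroneckerMap (· * ·) (1 : Matrix (Fin 2) (Fin 2) ℂ) (j : Matrix (Fin 2) (Fin 2) ℂ) * M)
    (h3 : M * Matrix.kroneckerMap (· * ·) C (c : Matrix (Fin 2) (Fin 2) ℂ) =
      Matrix.kroneckerMap (· * ·) C (c : Matrix (Fin 2) (Fin 2) ℂ) * M)
    (h4 : M * Matrix.kroneckerMap (· * ·) S (s : Matrix (Fin 2) (Fin 2) ℂ) =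
      Matrix.kroneckerMap (· * ·) S (s : Matrix (Fin 2) (Fin 2) ℂ) * M) :
    ∃ a : ℂ, M = a • 1 := by
  have key : ∀ (X : Matrix (Fin 2) (Fin 2) ℂ),
      M * Matrix.kroneckerMap (· * ·) (1 : Matrix (Fin 2) (Fin 2) ℂ) X =
      Matrix.kroneckerMap (· * ·) (1 : Matrix (Fin 2) (Fin 2) ℂ) X * M → ∀ a b : Fin 2,
      (Matrix.of fun x y => M (a, x) (b, y)) * X = X * (Matrix.of fun x y => M (a, x) (b, y)) := by
    intro X hX a b
    ext x y
    have := congrFun (congrFun hX (a, x)) (b, y)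
    simp only [Matrix.mul_apply, Fintype.sum_prod_type, Matrix.kroneckerMap_apply] at this
    simp only [Matrix.mul_apply, Matrix.of_apply]
    simpa [Matrix.one_apply] using this
  have hA : ∀ a b : Fin 2, ∃ t : ℂ, (Matrix.of fun x y => M (a, x) (b, y)) = t • (1 : Matrix (Fin 2) (Fin 2) ℂ) :=
    fun a b => hij _ (key _ h1 a b) (key _ h2 a b)
  choose A hA using hA
  have hM : M = Matrix.kroneckerMap (· * ·) (Matrix.of A) (1 : Matrix (Fin 2) (Fin 2) ℂ) := by
    ext ⟨a, x⟩ ⟨b, y⟩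
    have := congrFun (congrFun (hA a b) x) y
    simpa using this
  have key2 : ∀ (X Y : Matrix (Fin 2) (Fin 2) ℂ), Y ≠ 0 →
      M * Matrix.kroneckerMap (· * ·) X Y = Matrix.kroneckerMap (· * ·) X Y * M →
      Matrix.of A * X = X * Matrix.of A := by
    intro X Y hY hXY
    rw [hM] at hXY
    have e1 := Matrix.mul_kronecker_mul (Matrix.of A) X (1 : Matrix (Fin 2) (Fin 2) ℂ) Y
    have e2 := Matrix.mul_kronecker_mul X (Matrix.of A) Y (1 : Matrix (Fin 2) (Fin 2) ℂ)
    have e3 := e1.trans (hXY.trans e2.symm)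
    rw [one_mul, mul_one] at e3
    obtain ⟨x, y, hxy⟩ : ∃ x y, Y x y ≠ 0 := by
      by_contra hcon
      push Not at hcon
      exact hY (by ext x y; exact hcon x y)
    ext a b
    have := congrFun (congrFun e3 (a, x)) (b, y)
    simp only [Matrix.kroneckerMap_apply] at this
    exact mul_right_cancel₀ hxy this
  obtain ⟨t, ht⟩ := hCS _ (key2 _ _ hc h3) (key2 _ _ hs h4)
  refine ⟨t, ?_⟩
  rw [hM, ht, Matrix.smul_kronecker, Matrix.one_kronecker_one]

theorem oct_cod {G K : Type} [Group G] [Group K] [Finite G] (φ : G →* K)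
    (hφ : Function.Surjective φ) {i j c s : K} (h : OctRel i j c s)
    (hgen : Subgroup.closure {i, j, c, s} = ⊤) (hz : i * i ≠ 1)
    (hC : ∀ y, Commute y i → Commute y j → y = 1 ∨ y = i * i) : 6 ≤ (codSet G).ncard := by
  obtain ⟨hcard, -⟩ := oct_card h hgen hz
  obtain ⟨f0, π, hfinj, hf0i, hf0j, hπc, hπs, hπ, hker⟩ := oct_struct h hgen hz
  obtain ⟨f, hfi, hfj, hf⟩ := oct_form h
  have hz2 : (i * i) * (i * i) = 1 := by
    rw [← h.1]; simp only [pow_succ, pow_zero, one_mul, mul_assoc]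
  have c1 : 1 ∈ codSet G := by
    refine cod_of φ hφ (1 : K →* (Matrix (Fin 1) (Fin 1) ℂ)ˣ) ?_ 1 1 ?_ (by simp)
    · intro M _
      exact ⟨M 0 0, by ext a b; fin_cases a; fin_cases b; simp⟩
    · rw [MonoidHom.ker_one, Subgroup.index_top]
  have c2 : 2 ∈ codSet G := by
    refine cod_of φ hφ ((Units.map ((Int.castRingHom (Matrix (Fin 1) (Fin 1) ℂ)) :
      ℤ →* Matrix (Fin 1) (Fin 1) ℂ)).comp (Equiv.Perm.sign.comp π)) ?_ 2 2 ?_ (by simp)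
    · intro M _
      exact ⟨M 0 0, by ext a b; fin_cases a; fin_cases b; simp⟩
    · have hk : ((Units.map ((Int.castRingHom (Matrix (Fin 1) (Fin 1) ℂ)) :
          ℤ →* Matrix (Fin 1) (Fin 1) ℂ)).comp (Equiv.Perm.sign.comp π)).ker =
          (Equiv.Perm.sign.comp π).ker := by
        rw [MonoidHom.ker_comp_of_injective]
        intro a b hab
        apply Units.ext
        have h1 := congrArg (fun t : (Matrix (Fin 1) (Fin 1) ℂ)ˣ => (t : Matrix (Fin 1) (Fin 1) ℂ)) hab
        have h2 := congrFun (congrFun h1 0) 0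
        have h3 : (((a : ℤ) : Matrix (Fin 1) (Fin 1) ℂ)) 0 0 = (((b : ℤ) : Matrix (Fin 1) (Fin 1) ℂ)) 0 0 := h2
        rw [Matrix.intCast_apply, Matrix.intCast_apply, if_pos rfl, if_pos rfl] at h3
        exact_mod_cast h3
      rw [hk, Subgroup.index_ker, MonoidHom.range_eq_top.2, Subgroup.card_top,
        Nat.card_eq_fintype_card]
      · rfl
      · exact (Equiv.Perm.sign_surjective (Fin 3)).comp hπ
  obtain ⟨i3, j3, c3, s3, r3, hi3, hj3, hc3, hs3⟩ := oct3
  obtain ⟨iS, jS, cS, sS, rS, hiS, hjS, hcS, hsS⟩ := octS3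
  obtain ⟨i2, j2, c2', s2, r2, hij2, hz2', hc2, hs2⟩ := oct2
  have cI : ((cS : Matrix (Fin 2) (Fin 2) ℤ).map (fun x => (x : ℂ))) = !![0, -1; 1, -1] := by
    rw [hcS]; ext a b; fin_cases a <;> fin_cases b <;> simp
  have sI : ((sS : Matrix (Fin 2) (Fin 2) ℤ).map (fun x => (x : ℂ))) = !![0, 1; 1, 0] := by
    rw [hsS]; ext a b; fin_cases a <;> fin_cases b <;> simp
  have c3m : 3 ∈ codSet G := by
    obtain ⟨R, hRi, hRj, hRc, hRs⟩ := von_dyck h hgen hcard rS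
    refine cod_of φ hφ ((intUnits (Fin 2)).comp R) ?_ 6 3 ?_ (by simp)
    · intro M hM
      have m1 := hM c
      have m2 := hM s
      rw [MonoidHom.comp_apply, hRc, intUnits_val, cI] at m1
      rw [MonoidHom.comp_apply, hRs, intUnits_val, sI] at m2
      exact octS3_comm M m1 m2
    · have hk : R.ker = π.ker := by
        have hiS1 : iS = 1 := Units.ext hiS
        have hjS1 : jS = 1 := Units.ext hjS
        have hRf : ∀ q, R (f q) = 1 := by
          intro q
          obtain ⟨a, -, b, -, rfl⟩ := q8_form q
          simp only [map_mul, map_pow, hfi, hfj, hRi, hRj, hiS1, hjS1, one_pow, mul_one]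
        have hff : ∀ q, f q = f0 q := by
          intro q
          obtain ⟨a, -, b, -, rfl⟩ := q8_form q
          simp only [map_mul, map_pow, hfi, hfj, hf0i, hf0j]
        ext y
        constructor
        · intro hy
          rw [hker]
          obtain ⟨q, e, n, rfl⟩ := hf y (by rw [hgen]; trivial)
          rw [MonoidHom.mem_ker, map_mul, map_mul, hRf, one_mul, map_pow, map_pow, hRc, hRs] at hy
          have hy' := congrArg Units.val hy
          rw [Units.val_mul, Units.val_pow_eq_pow_val, Units.val_pow_eq_pow_val, hcS, hsS] at hy'
          obtain ⟨rfl, rfl⟩ := octS3_words e n hy'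
          exact ⟨q, by simp [hff]⟩
        · rw [hker]
          rintro ⟨q, rfl⟩
          rw [← hff]
          exact hRf q
      rw [intUnits_ker, hk, Subgroup.index_ker, MonoidHom.range_eq_top.2 hπ, Subgroup.card_top,
        Nat.card_eq_fintype_card]
      rfl
  have c8 : 8 ∈ codSet G := by
    obtain ⟨R, hRi, hRj, hRc, hRs⟩ := von_dyck h hgen hcard r3
    have e1 : (!![1, 0, 0; 0, -1, 0; 0, 0, -1] : Matrix (Fin 3) (Fin 3) ℤ).map (fun x => (x : ℂ)) =
        !![1, 0, 0; 0, -1, 0; 0, 0, -1] := by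
      ext a b; fin_cases a <;> fin_cases b <;> simp
    have e2 : (!![-1, 0, 0; 0, 1, 0; 0, 0, -1] : Matrix (Fin 3) (Fin 3) ℤ).map (fun x => (x : ℂ)) =
        !![-1, 0, 0; 0, 1, 0; 0, 0, -1] := by
      ext a b; fin_cases a <;> fin_cases b <;> simp
    have e3 : (!![0, 0, 1; 1, 0, 0; 0, 1, 0] : Matrix (Fin 3) (Fin 3) ℤ).map (fun x => (x : ℂ)) =
        !![0, 0, 1; 1, 0, 0; 0, 1, 0] := by
      ext a b; fin_cases a <;> fin_cases b <;> simp
    refine cod_of φ hφ ((intUnits (Fin 3)).comp R) ?_ 24 8 ?_ (by simp)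
    · intro M hM
      have m1 := hM i
      have m2 := hM j
      have m3 := hM c
      rw [MonoidHom.comp_apply, hRi, intUnits_val, hi3] at m1
      rw [MonoidHom.comp_apply, hRj, intUnits_val, hj3] at m2
      rw [MonoidHom.comp_apply, hRc, intUnits_val, hc3] at m3
      rw [e1] at m1
      rw [e2] at m2
      rw [e3] at m3
      exact oct3_comm M m1 m2 m3
    · have hk : R.ker = Subgroup.zpowers (i * i) := by
        apply le_antisymm
        · intro y hy
          obtain ⟨q, e, n, rfl⟩ := hf y (by rw [hgen]; trivial)
          obtain ⟨a, ha, b, hb, rfl⟩ := q8_form q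
          rw [MonoidHom.mem_ker] at hy
          simp only [map_mul, map_pow, hfi, hfj, hRi, hRj, hRc, hRs] at hy
          have hy' := congrArg Units.val hy
          simp only [Units.val_mul, Units.val_pow_eq_pow_val, hi3, hj3, hc3, hs3, Units.val_one] at hy'
          obtain ⟨h1, h2, rfl, rfl⟩ := oct3_words ⟨a, ha⟩ ⟨b, hb⟩ e n hy'
          have hb0 : b = 0 := congrArg Fin.val h2
          subst hb0
          have ha0 : a = 0 ∨ a = 2 := by
            rcases h1 with h1 | h1
            · exact Or.inl (congrArg Fin.val h1)
            · exact Or.inr (congrArg Fin.val h1)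
          rcases ha0 with rfl | rfl
          · simp
          · simp only [map_mul, map_pow, hfi, pow_zero, mul_one, Fin.val_zero, pow_two]
            exact Subgroup.mem_zpowers _
        · rw [Subgroup.zpowers_le, MonoidHom.mem_ker, map_mul, hRi]
          apply Units.ext
          rw [Units.val_mul, hi3]
          decide
      have ho : Nat.card (Subgroup.zpowers (i * i)) = 2 := by
        rw [Nat.card_zpowers]
        exact orderOf_eq_prime (by rw [pow_two, hz2]) hz
      have hmul := Subgroup.card_mul_index (Subgroup.zpowers (i * i))
      rw [ho, hcard] at hmul
      rw [intUnits_ker, hk]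
      omega
  have c24 : 24 ∈ codSet G := by
    obtain ⟨R, hRi, hRj, hRc, hRs⟩ := von_dyck h hgen hcard r2
    refine cod_of φ hφ R ?_ 48 24 (oct_faithful h hgen hz hC R ?_) (by simp)
    · intro M hM
      have m1 := hM i
      have m2 := hM j
      rw [hRi] at m1
      rw [hRj] at m2
      exact hij2 M m1 m2
    · rw [map_mul, hRi]; exact hz2'
  have c12 : 12 ∈ codSet G := by
    obtain ⟨R2, hR2i, hR2j, hR2c, hR2s⟩ := von_dyck h hgen hcard r2
    obtain ⟨RS, hRSi, hRSj, hRSc, hRSs⟩ := von_dyck h hgen hcard rS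
    let R := kronUnits.comp (((intUnits (Fin 2)).comp RS).prod R2)
    have hR : ∀ y, (R y : Matrix (Fin 2 × Fin 2) (Fin 2 × Fin 2) ℂ) = Matrix.kroneckerMap (· * ·)
      (intUnits (Fin 2) (RS y) : Matrix (Fin 2) (Fin 2) ℂ) (R2 y : Matrix (Fin 2) (Fin 2) ℂ) := fun y => rfl
    have hi1 : intUnits (Fin 2) iS = 1 := by rw [show iS = 1 from Units.ext hiS, map_one]
    have hj1 : intUnits (Fin 2) jS = 1 := by rw [show jS = 1 from Units.ext hjS, map_one]
    refine cod_of φ hφ R ?_ 48 12 (oct_faithful h hgen hz hC R ?_) (by simp)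
    · intro M hM
      have m1 := hM i
      have m2 := hM j
      have m3 := hM c
      have m4 := hM s
      rw [hR, hRSi, hR2i, hi1, Units.val_one] at m1
      rw [hR, hRSj, hR2j, hj1, Units.val_one] at m2
      rw [hR, hRSc, hR2c, intUnits_val, cI] at m3
      rw [hR, hRSs, hR2s, intUnits_val, sI] at m4
      exact kron_comm i2 j2 c2' s2 _ _ hij2 hc2 hs2 octS3_comm M m1 m2 m3 m4
    · intro h0
      apply hz2'
      have h1 := congrArg Units.val h0
      rw [hR, map_mul, map_mul, map_mul, hRSi, hi1, hR2i, mul_one, Units.val_one, Units.val_one] at h1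
      apply Units.ext
      ext a b
      have := congrFun (congrFun h1 (0, a)) (0, b)
      simpa [Matrix.one_apply] using this
  have hsub : (({1, 2, 3, 8, 12, 24} : Finset ℕ) : Set ℕ) ⊆ codSet G := by
    intro n hn
    simp only [Finset.coe_insert, Finset.coe_singleton, Set.mem_insert_iff,
      Set.mem_singleton_iff] at hn
    rcases hn with rfl | rfl | rfl | rfl | rfl | rfl <;> assumption
  have := Set.ncard_le_ncard hsub (codSet_finite G)
  rw [Set.ncard_coe_finset] at this
  exact this


theorem stmt_14 {G : Type} [Group G] [Finite G] {F : Type} [Field F] {V : Type}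
    [AddCommGroup V] [Module F V] [Finite V]
    (ρ : G →* (V ≃ₗ[F] V)) (hfaithful : Function.Injective ρ)
    (hfpf : ∀ g : G, g ≠ 1 → ∀ v : V, v ≠ 0 → ρ g v ≠ v)
    (hsol : IsSolvable G) :
    fittingHeight G ≤ 2 ∨
      (fittingHeight G = 3 ∧ HasBinaryOctahedralQuotient G ∧ 6 ≤ (codSet G).ncard) := by
  have hinv : ∀ x y : G, x ≠ 1 → y ≠ 1 → x * x = 1 → y * y = 1 → x = y :=
    fun x y hx hy hx2 hy2 => fpf_inv ρ hfaithful hfpf x y hx hy hx2 hy2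
  have hprime : ∀ p : ℕ, p.Prime → ∀ x y : G, x * y = y * x → x ^ p = 1 → y ^ p = 1 → x ≠ 1 →
      y ∈ Subgroup.zpowers x :=
    fun p hp x y hxy hx hy hx1 => fpf_prime ρ hfaithful hfpf p hp x y hxy hx hy hx1
  by_cases h2 : fittingHeight G ≤ 2
  · exact Or.inl h2
  rcases main_case hsol hprime hinv with h | ⟨h3, i, j, g, t, hbad⟩
  · exact Or.inl h
  · right
    obtain ⟨N, hN, i', j', c', s', hrel, hgen, hz, hC⟩ := bad_quot hinv i j g t hbad
    refine ⟨by omega, ⟨G ⧸ N, inferInstance, QuotientGroup.mk' N, QuotientGroup.mk'_surjective N,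
      oct_is hrel hgen hz hC⟩, ?_⟩
    exact oct_cod (QuotientGroup.mk' N) (QuotientGroup.mk'_surjective N) hrel hgen hz hC
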